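/- arXiv:1412.7840 — 3 statements merged into one kernel-verified Lean document; each statement's English description precedes it below -/
import Mathlib

section
/- Suppose the pair (A,B) is controllable (the controllability matrix [B, AB, …, A^{n-1}B] has rank n) and A is nonsingular. Then for every initial state ξ in the reachable set R, the value function of the maximum hands-off control problem equals the L¹ value function: V(ξ) = V₁(ξ). -/
open MeasureTheory Set

noncomputable section

/-- Controllability matrix `[B, AB, ..., A^{n-1}B]`. -/
def ctrbMatrix (n : ℕ) (A : Matrix (Fin n) (Fin n) ℝ) (B : Fin n → ℝ) :
    Matrix (Fin n) (Fin n) ℝ :=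
  Matrix.of fun i j => (A ^ (j : ℕ)).mulVec B i

/-- `∫₀ᵀ e^{-As} B u(s) ds`. -/
def stateInt (n : ℕ) (T : ℝ) (A : Matrix (Fin n) (Fin n) ℝ) (B : Fin n → ℝ)
    (u : ℝ → ℝ) : Fin n → ℝ :=
  ∫ s in Icc (0:ℝ) T, u s • (NormedSpace.exp ((-s) • A)).mulVec B

/-- The magnitude constraint `‖u‖_∞ ≤ 1` on `[0,T]`. -/
def MagBdd (T : ℝ) (u : ℝ → ℝ) : Prop := ∀ t ∈ Icc (0:ℝ) T, |u t| ≤ 1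

/-- The `L¹` norm of `u` on `[0,T]`. -/
def L1Norm (T : ℝ) (u : ℝ → ℝ) : ℝ := ∫ t in Icc (0:ℝ) T, |u t|

/-- The `L⁰` norm of `u`: Lebesgue measure of `{t ∈ [0,T] : u t ≠ 0}`. -/
def L0Norm (T : ℝ) (u : ℝ → ℝ) : ℝ := (volume {t ∈ Icc (0:ℝ) T | u t ≠ 0}).toReal

/-- Admissible controls steering `ξ` to `0` at time `T`:
`∫₀ᵀ e^{-As} B u(s) ds = -ξ` and `‖u‖_∞ ≤ 1`. -/
def Admissible (n : ℕ) (T : ℝ) (A : Matrix (Fin n) (Fin n) ℝ) (B : Fin n → ℝ)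
    (ξ : Fin n → ℝ) (u : ℝ → ℝ) : Prop :=
  Measurable u ∧ MagBdd T u ∧ stateInt n T A B u = -ξ

/-- Value function of the maximum hands-off (`L⁰`-optimal) control problem. -/
def V0 (n : ℕ) (T : ℝ) (A : Matrix (Fin n) (Fin n) ℝ) (B : Fin n → ℝ)
    (ξ : Fin n → ℝ) : ℝ :=
  sInf {c | ∃ u, Admissible n T A B ξ u ∧ c = L0Norm T u}

/-- Value function of the `L¹`-optimal control problem. -/
def V1 (n : ℕ) (T : ℝ) (A : Matrix (Fin n) (Fin n) ℝ) (B : Fin n → ℝ)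
    (ξ : Fin n → ℝ) : ℝ :=
  sInf {c | ∃ u, Admissible n T A B ξ u ∧ c = L1Norm T u}

/-- The reachable set `R`. -/
def Reach (n : ℕ) (T : ℝ) (A : Matrix (Fin n) (Fin n) ℝ) (B : Fin n → ℝ) :
    Set (Fin n → ℝ) :=
  {x | ∃ u, Measurable u ∧ MagBdd T u ∧ x = stateInt n T A B u}

/-- The set `R_α`. -/
def ReachL1 (n : ℕ) (T : ℝ) (A : Matrix (Fin n) (Fin n) ℝ) (B : Fin n → ℝ)
    (α : ℝ) : Set (Fin n → ℝ) :=
  {x | ∃ u, Measurable u ∧ MagBdd T u ∧ L1Norm T u ≤ α ∧ x = stateInt n T A B u}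

/- Since `|u| ≤ 1`, the `L¹` norm of a control never exceeds its `L⁰` norm. Conversely, write an
admissible control as `u = |u| σ` with `|σ| ≤ 1`, and let `k(s) = e^{-As} B`. The weights
`0 ≤ w ≤ 1` in `L²` for which `∫ w σ k` and `∫ w` agree with their values at `w = |u|` form a closed
bounded convex set, which is weakly compact and hence has an extreme point `w`. If `min(w, 1 - w)`
were not zero, then on an atomless space the functions dominated by its multiples would form an
infinite-dimensional space, and one of them would perturb `w` in both directions without changing
the finitely many moments. So `w` is the indicator of a set `E`, and the control equal to `σ` on `E`
and to `0` elsewhere is admissible with `L⁰` norm at most `∫ w = ‖u‖₁`. -/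

open Polynomial
open scoped ENNReal

section ExtremePoints

lemma eq_zero_of_mem_extremePoints {𝕜 E : Type*} [Field 𝕜] [LinearOrder 𝕜]
    [IsStrictOrderedRing 𝕜] [AddCommGroup E] [Module 𝕜 E] {K : Set E} {w h : E}
    (hw : w ∈ K.extremePoints 𝕜) (hadd : w + h ∈ K) (hsub : w - h ∈ K) : h = 0 := by
  have hmid : w ∈ openSegment 𝕜 (w + h) (w - h) :=
    ⟨1 / 2, 1 / 2, by positivity, by positivity, add_halves 1, by module⟩
  simpa using hw.2 hadd hsub hmid

variable {H : Type*} [NormedAddCommGroup H] [InnerProductSpace ℝ H] [CompleteSpace H]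

/- By the Riesz representation the closed ball is the image of a weak-* compact ball of the dual. -/
lemma isCompact_toWeakSpace_image_closedBall (x : H) (r : ℝ) :
    IsCompact (toWeakSpace ℝ H '' Metric.closedBall x r) := by
  let D := InnerProductSpace.toDual ℝ H
  let riesz : WeakDual ℝ H → WeakSpace ℝ H := fun φ ↦ toWeakSpace ℝ H (D.symm φ.toStrongDual)
  have continuous_riesz : Continuous riesz := by
    refine WeakBilin.continuous_of_continuous_eval _ fun l ↦ ?_
    have eval_riesz (φ : WeakDual ℝ H) : φ (D.symm l) = l (D.symm φ.toStrongDual) := by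
      rw [← InnerProductSpace.toDual_symm_apply (y := l), real_inner_comm,
        InnerProductSpace.toDual_symm_apply, WeakDual.toStrongDual_apply]
    exact (WeakDual.eval_continuous (D.symm l)).congr eval_riesz
  have image_riesz : riesz '' (WeakDual.toStrongDual ⁻¹' Metric.closedBall (D x) r) =
      toWeakSpace ℝ H '' Metric.closedBall x r := by
    rw [← image_image (toWeakSpace ℝ H), ← image_image D.symm,
      image_preimage_eq _ WeakDual.toStrongDual.surjective, D.symm.image_closedBall,
      D.symm_apply_apply]
  rw [← image_riesz]
  exact (WeakDual.isCompact_closedBall (D x) r).image continuous_riesz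

lemma isCompact_toWeakSpace_image {K : Set H} (hconv : Convex ℝ K) (hclosed : IsClosed K)
    (hbdd : Bornology.IsBounded K) : IsCompact (toWeakSpace ℝ H '' K) := by
  obtain ⟨r, hr⟩ := hbdd.subset_closedBall 0
  refine (isCompact_toWeakSpace_image_closedBall 0 r).of_isClosed_subset ?_ (image_mono hr)
  rw [← hclosed.closure_eq, hconv.toWeakSpace_closure ℝ]
  exact isClosed_closure

theorem extremePoints_nonempty_of_isBounded {K : Set H} (hconv : Convex ℝ K)
    (hclosed : IsClosed K) (hbdd : Bornology.IsBounded K) (hne : K.Nonempty) :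
    (K.extremePoints ℝ).Nonempty := by
  have : LocallyConvexSpace ℝ (WeakSpace ℝ H) :=
    inferInstanceAs (LocallyConvexSpace ℝ (WeakBilin (topDualPairing ℝ H).flip))
  have h := (isCompact_toWeakSpace_image hconv hclosed hbdd).extremePoints_nonempty (hne.image _)
  rwa [← image_extremePoints, image_nonempty] at h

end ExtremePoints

section OrderIntervals

lemma abs_le_inf_sub_iff {G : Type*} [AddCommGroup G] [Lattice G] [IsOrderedAddMonoid G]
    {w h e : G} : |h| ≤ w ⊓ (e - w) ↔ w + h ∈ Icc 0 e ∧ w - h ∈ Icc 0 e := by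
  rw [le_inf_iff, abs_le', abs_le', mem_Icc, mem_Icc, neg_le_iff_add_nonneg, neg_le_sub_iff_le_add,
    le_sub_iff_add_le', sub_nonneg, sub_le_iff_le_add]
  tauto

lemma isBounded_Icc_zero {E : Type*} [NormedAddCommGroup E] [Lattice E] [IsOrderedAddMonoid E]
    [HasSolidNorm E] (e : E) : Bornology.IsBounded (Icc 0 e) := by
  refine isBounded_iff_forall_norm_le.2 ⟨‖e‖, fun f hf ↦ norm_le_norm_of_abs_le_abs ?_⟩
  rw [abs_of_nonneg hf.1, abs_of_nonneg (hf.1.trans hf.2)]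
  exact hf.2

variable {α : Type*} [MeasurableSpace α] {μ : Measure α} {r : ℝ≥0∞}

instance instPosSMulMonoLp : PosSMulMono ℝ (Lp ℝ r μ) := .of_smul_nonneg fun c hc f hf ↦ by
  rw [← Lp.coeFn_nonneg] at hf ⊢
  filter_upwards [hf, Lp.coeFn_smul c f] with x hx hcx
  rw [hcx]
  exact mul_nonneg hc hx

lemma exists_indicatorConstLp_of_inf_sub_eq_zero [IsFiniteMeasure μ] {w : Lp ℝ r μ}
    (hw : w ⊓ (Lp.const r μ 1 - w) = 0) :
    ∃ (E : Set α) (hE : MeasurableSet E), indicatorConstLp r hE (measure_ne_top μ E) 1 = w := by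
  have hE : MeasurableSet {x | w x = 1} :=
    (Lp.stronglyMeasurable w).measurable (measurableSet_singleton 1)
  have hw01 : ∀ᵐ x ∂μ, w x = 0 ∨ w x = 1 := by
    rw [Lp.eq_zero_iff_ae_eq_zero] at hw
    filter_upwards [hw, Lp.coeFn_inf w (Lp.const r μ 1 - w), Lp.coeFn_sub (Lp.const r μ 1) w,
      Lp.coeFn_const r μ (1 : ℝ)] with x h_zero h_inf h_sub h_const
    rw [h_inf, Pi.inf_apply, h_sub, Pi.sub_apply, h_const, Function.const_apply,
      Pi.zero_apply] at h_zero
    exact (min_eq_iff.1 h_zero).imp And.left fun h ↦ (sub_eq_zero.1 h.1).symm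
  refine ⟨{x | w x = 1}, hE, Lp.ext (indicatorConstLp_coeFn.trans ?_)⟩
  filter_upwards [hw01] with x hx
  rcases hx with hx | hx <;> simp [indicator, hx]

end OrderIntervals

section Lyapunov

variable {α : Type*} [MeasurableSpace α] {μ : Measure α} {r : ℝ≥0∞}

lemma exists_polynomial_mul_linearMap {φ : α → ℝ} (hφ : Measurable φ) {K : Set ℝ}
    (hK : IsCompact K) (hφK : ∀ x, φ x ∈ K) (q : Lp ℝ r μ) :
    ∃ M : ℝ[X] →ₗ[ℝ] Lp ℝ r μ, ∀ p, M p =ᵐ[μ] fun x ↦ p.eval (φ x) * q x := by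
  have hmem (p : ℝ[X]) : MemLp (fun x ↦ p.eval (φ x) * q x) r μ := by
    obtain ⟨C, hC⟩ := hK.exists_bound_of_continuousOn p.continuous.continuousOn
    exact (Lp.memLp q).mul (memLp_top_of_bound
      (p.continuous.measurable.comp hφ).aestronglyMeasurable C (.of_forall fun x ↦ hC _ (hφK x)))
  refine ⟨{ toFun p := (hmem p).toLp, map_add' p₁ p₂ := ?_, map_smul' c p := ?_ },
    fun p ↦ (hmem p).coeFn_toLp⟩
  · rw [← MemLp.toLp_add]
    exact MemLp.toLp_congr _ _ (.of_forall fun x ↦ by simp [add_mul])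
  · rw [RingHom.id_apply, ← MemLp.toLp_const_smul]
    exact MemLp.toLp_congr _ _ (.of_forall fun x ↦ by simp [mul_assoc])

lemma exists_polynomial_ne_zero_map_eq_zero {F : Type*} [AddCommGroup F] [Module ℝ F]
    [FiniteDimensional ℝ F] (Λ : ℝ[X] →ₗ[ℝ] F) {K : Set ℝ} (hK : IsCompact K) :
    ∃ p ≠ 0, Λ p = 0 ∧ ∀ t ∈ K, |p.eval t| ≤ 1 := by
  obtain ⟨p, hp, hp0⟩ : ∃ p, Λ p = 0 ∧ p ≠ 0 := by
    have hΛ : ¬ Function.Injective Λ := fun h ↦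
      Polynomial.not_finite (R := ℝ) (Module.Finite.of_injective Λ h)
    rw [injective_iff_map_eq_zero] at hΛ
    push Not at hΛ
    exact hΛ
  obtain ⟨C, hC⟩ := hK.exists_bound_of_continuousOn p.continuous.continuousOn
  have hC0 : 0 < max C 1 := lt_max_of_lt_right one_pos
  refine ⟨(max C 1)⁻¹ • p, smul_ne_zero (inv_ne_zero hC0.ne') hp0,
    by rw [map_smul, hp, smul_zero], fun t ht ↦ ?_⟩
  rw [eval_smul, smul_eq_mul, abs_mul, abs_inv, abs_of_pos hC0, inv_mul_le_one₀ hC0]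
  exact (hC t ht).trans (le_max_left _ _)

lemma exists_measurable_injective_mem_Icc (α : Type*) [MeasurableSpace α]
    [MeasurableSpace.CountablySeparated α] :
    ∃ φ : α → ℝ, Measurable φ ∧ Function.Injective φ ∧ ∀ x, φ x ∈ Icc 0 1 := by
  obtain ⟨f, hf, f_inj⟩ := MeasurableSpace.measurable_injection_nat_bool_of_countablySeparated α
  obtain ⟨g, hg⟩ := exists_measurableEmbedding_real (ℕ → Bool)
  exact ⟨Real.sigmoid ∘ g ∘ f, continuous_sigmoid.measurable.comp (hg.measurable.comp hf),
    Real.sigmoid_injective.comp (hg.injective.comp f_inj),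
    fun _ ↦ ⟨Real.sigmoid_nonneg _, Real.sigmoid_le_one _⟩⟩

lemma ae_eval_ne_zero [NullSingletonClass μ] {φ : α → ℝ} (hφ : Function.Injective φ)
    {p : ℝ[X]} (hp : p ≠ 0) : ∀ᵐ x ∂μ, p.eval (φ x) ≠ 0 := by
  have hroots : {t : ℝ | p.eval t = 0}.Finite := finite_setOfPred_isRoot hp
  exact compl_mem_ae_iff.2 ((hroots.preimage hφ.injOn).measure_zero μ)

variable [MeasurableSpace.CountablySeparated α] [NullSingletonClass μ]

/- The multiples `p(φ) q` of `q` by polynomials in an injective function `φ` form an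
infinite-dimensional space, so some nonzero one lies in the kernel of `L`. -/
lemma exists_ne_zero_abs_le_map_eq_zero {F : Type*} [AddCommGroup F] [Module ℝ F]
    [FiniteDimensional ℝ F] (L : Lp ℝ r μ →ₗ[ℝ] F) {q : Lp ℝ r μ} (hq : q ≠ 0) :
    ∃ h ≠ 0, |h| ≤ |q| ∧ L h = 0 := by
  obtain ⟨φ, hφ, φ_inj, hφ01⟩ := exists_measurable_injective_mem_Icc α
  obtain ⟨M, hM⟩ := exists_polynomial_mul_linearMap hφ isCompact_Icc hφ01 q
  obtain ⟨p, hp, hLp, hp1⟩ :=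
    exists_polynomial_ne_zero_map_eq_zero (L ∘ₗ M) (isCompact_Icc (a := 0) (b := 1))
  refine ⟨M p, fun hMp ↦ hq ?_, ?_, hLp⟩
  · rw [Lp.eq_zero_iff_ae_eq_zero] at hMp ⊢
    filter_upwards [hMp, hM p, ae_eval_ne_zero (μ := μ) φ_inj hp] with x hMpx h_mul hpx
    exact (mul_eq_zero.1 (h_mul.symm.trans hMpx)).resolve_left hpx
  · rw [← Lp.coeFn_le]
    filter_upwards [Lp.coeFn_abs (M p), Lp.coeFn_abs q, hM p] with x h_abs h_absq h_mul
    rw [h_abs, h_absq, h_mul, abs_mul]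
    exact mul_le_of_le_one_left (abs_nonneg _) (hp1 _ (hφ01 x))

lemma inf_sub_eq_zero_of_mem_extremePoints {F : Type*} [AddCommGroup F] [Module ℝ F]
    [FiniteDimensional ℝ F] {L : Lp ℝ r μ →ₗ[ℝ] F} {c : F} {w e : Lp ℝ r μ}
    (hw : w ∈ (Icc 0 e ∩ L ⁻¹' {c}).extremePoints ℝ) : w ⊓ (e - w) = 0 := by
  obtain ⟨⟨hw₀, hwe⟩, hLw⟩ := hw.1
  by_contra hq
  obtain ⟨h, h_ne, h_le, hLh⟩ := exists_ne_zero_abs_le_map_eq_zero L hq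
  rw [abs_of_nonneg (le_inf hw₀ (sub_nonneg.2 hwe)), abs_le_inf_sub_iff] at h_le
  refine h_ne (eq_zero_of_mem_extremePoints hw ⟨h_le.1, ?_⟩ ⟨h_le.2, ?_⟩)
  · simpa [hLh] using hLw
  · simpa [hLh] using hLw

variable [IsFiniteMeasure μ]

theorem exists_map_indicatorConstLp_eq {F : Type*} [AddCommGroup F] [Module ℝ F]
    [TopologicalSpace F] [T1Space F] [FiniteDimensional ℝ F] (L : Lp ℝ 2 μ →L[ℝ] F)
    {v : Lp ℝ 2 μ} (hv : v ∈ Icc 0 (Lp.const 2 μ 1)) :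
    ∃ (E : Set α) (hE : MeasurableSet E),
      L (indicatorConstLp 2 hE (measure_ne_top μ E) 1) = L v := by
  obtain ⟨w, hw⟩ : ((Icc 0 (Lp.const 2 μ 1) ∩ L ⁻¹' {L v}).extremePoints ℝ).Nonempty :=
    extremePoints_nonempty_of_isBounded
      ((convex_Icc _ _).inter ((convex_singleton _).linear_preimage L.toLinearMap))
      (isClosed_Icc.inter (isClosed_singleton.preimage L.continuous))
      ((isBounded_Icc_zero _).subset inter_subset_left) ⟨v, hv, rfl⟩
  obtain ⟨E, hE, rfl⟩ := exists_indicatorConstLp_of_inf_sub_eq_zero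
    (inf_sub_eq_zero_of_mem_extremePoints (L := L.toLinearMap) hw)
  exact ⟨E, hE, hw.1.2⟩

variable {F : Type*} [NormedAddCommGroup F] [NormedSpace ℝ F] [FiniteDimensional ℝ F]

theorem exists_setIntegral_eq_integral_smul {g : α → F} (hg : MemLp g 2 μ) {v : α → ℝ}
    (hv : AEStronglyMeasurable v μ) (hv01 : ∀ᵐ x ∂μ, v x ∈ Icc 0 1) :
    ∃ E, MeasurableSet E ∧ ∫ x in E, g x ∂μ = ∫ x, v x • g x ∂μ := by
  have : CompleteSpace F := FiniteDimensional.complete ℝ F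
  let L : Lp ℝ 2 μ →L[ℝ] F := (ContinuousLinearMap.lsmul ℝ ℝ).flip.lpPairing μ 2 2 hg.toLp
  have hL {f : α → ℝ} (hf : MemLp f 2 μ) : L hf.toLp = ∫ x, f x • g x ∂μ := by
    simp only [L, ContinuousLinearMap.lpPairing_eq_integral]
    refine integral_congr_ae ?_
    filter_upwards [hg.coeFn_toLp, hf.coeFn_toLp] with x hgx hfx
    simp [hgx, hfx]
  have hvL : MemLp v 2 μ :=
    .of_bound hv 1 (hv01.mono fun x hx ↦ (Real.norm_of_nonneg hx.1).trans_le hx.2)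
  have hv_mem : hvL.toLp ∈ Icc 0 (Lp.const 2 μ 1) := by
    rw [mem_Icc, ← Lp.coeFn_nonneg, ← Lp.coeFn_le]
    constructor
    · filter_upwards [hvL.coeFn_toLp, hv01] with x hvx hx
      exact hx.1.trans_eq hvx.symm
    · filter_upwards [hvL.coeFn_toLp, hv01, Lp.coeFn_const 2 μ (1 : ℝ)] with x hvx hx h_const
      exact (hvx.trans_le hx.2).trans_eq h_const.symm
  obtain ⟨E, hE, hLE⟩ := exists_map_indicatorConstLp_eq L hv_mem
  refine ⟨E, hE, ?_⟩
  rw [← hL hvL, ← hLE, indicatorConstLp, hL, ← integral_indicator hE]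
  simp only [indicator, ite_smul, one_smul, zero_smul]

theorem exists_integral_smul_eq_measureReal_support_le {k : α → F} (hk : MemLp k 2 μ)
    {u : α → ℝ} (hu : Measurable u) (hu1 : ∀ᵐ x ∂μ, |u x| ≤ 1) :
    ∃ u' : α → ℝ, Measurable u' ∧ (∀ x, |u' x| ≤ 1) ∧
      ∫ x, u' x • k x ∂μ = ∫ x, u x • k x ∂μ ∧ μ.real u'.support ≤ ∫ x, |u x| ∂μ := by
  have : CompleteSpace F := FiniteDimensional.complete ℝ F
  let σ : α → ℝ := fun x ↦ u x / |u x|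
  have hσ : Measurable σ := hu.div hu.abs
  have hσ1 (x : α) : |σ x| ≤ 1 := by rw [abs_div, abs_abs]; exact div_self_le_one _
  have abs_mul_σ (x : α) : |u x| * σ x = u x := mul_div_cancel_of_imp' abs_eq_zero.1
  have memLp_smul {f : α → ℝ} (hf : Measurable f) (hf1 : ∀ᵐ x ∂μ, |f x| ≤ 1) :
      MemLp (fun x ↦ f x • k x) 2 μ := hk.smul (memLp_top_of_bound hf.aestronglyMeasurable 1 hf1)
  have hσk := memLp_smul hσ (.of_forall hσ1)
  have huk := (memLp_smul hu hu1).integrable one_le_two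
  have hu_int : Integrable u μ := .of_bound hu.aestronglyMeasurable 1 hu1
  obtain ⟨E, hE, hEσ⟩ := exists_setIntegral_eq_integral_smul
    (g := fun x ↦ (σ x • k x, (1 : ℝ))) (.of_fst_snd ⟨hσk, memLp_const 1⟩)
    hu.abs.aestronglyMeasurable (hu1.mono fun x hx ↦ ⟨abs_nonneg _, hx⟩)
  simp only [Prod.smul_mk, smul_smul, abs_mul_σ, smul_eq_mul, mul_one] at hEσ
  rw [integral_pair (hσk.integrable one_le_two).integrableOn (integrable_const 1),
    integral_pair huk hu_int.abs, Prod.mk.injEq, setIntegral_one_eq_measureReal] at hEσ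
  refine ⟨E.indicator σ, hσ.indicator hE, fun x ↦ (norm_indicator_le_norm_self σ x).trans (hσ1 x),
    ?_, (measureReal_mono support_indicator_subset).trans_eq hEσ.2⟩
  rw [← hEσ.1, ← integral_indicator hE]
  simp only [indicator, ite_smul, zero_smul]

end Lyapunov

lemma integral_norm_le_measureReal_support {α E : Type*} [MeasurableSpace α] {μ : Measure α}
    [IsFiniteMeasure μ] [NormedAddCommGroup E] {u : α → E} (hu : ∀ᵐ x ∂μ, ‖u x‖ ≤ 1) :
    ∫ x, ‖u x‖ ∂μ ≤ μ.real u.support := by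
  have h_support : (fun x ↦ ‖u x‖).support = u.support := by
    ext x
    simp only [Function.mem_support, ne_eq, norm_eq_zero]
  rw [← setIntegral_support, h_support, ← one_mul (μ.real _)]
  refine (Real.le_norm_self _).trans ?_
  refine norm_setIntegral_le_of_norm_le_const_ae' (measure_lt_top μ _) ?_
  filter_upwards [hu] with x hx _
  rwa [norm_norm]

lemma memLp_restrict_of_continuousOn {X E : Type*} [TopologicalSpace X] [MeasurableSpace X]
    [OpensMeasurableSpace X] [NormedAddCommGroup E] [SecondCountableTopologyEither X E]
    {μ : Measure X} [IsFiniteMeasureOnCompacts μ] {p : ℝ≥0∞} {f : X → E} {K : Set X}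
    (hf : ContinuousOn f K) (hK : IsCompact K) (hKm : MeasurableSet K) :
    MemLp f p (μ.restrict K) := by
  obtain ⟨C, hC⟩ := hK.exists_bound_of_continuousOn hf
  have : IsFiniteMeasure (μ.restrict K) := isFiniteMeasure_restrict.2 hK.measure_ne_top
  exact .of_bound (hf.aestronglyMeasurable hKm) C (ae_restrict_of_forall_mem hKm hC)

section HandsOffControl

open scoped Matrix.Norms.Operator in
lemma continuous_exp_neg_smul_mulVec {m : Type*} [Fintype m] [DecidableEq m] (A : Matrix m m ℝ)
    (B : m → ℝ) : Continuous fun s : ℝ ↦ (NormedSpace.exp ((-s) • A)).mulVec B := by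
  have := NormedSpace.exp_continuous (𝔸 := Matrix m m ℝ)
  fun_prop

lemma L0Norm_eq_measureReal_support (T : ℝ) (u : ℝ → ℝ) :
    L0Norm T u = (volume.restrict (Icc 0 T)).real u.support := by
  rw [measureReal_restrict_apply' measurableSet_Icc, inter_comm]
  rfl

lemma MagBdd.ae_restrict {T : ℝ} {u : ℝ → ℝ} (hu : MagBdd T u) :
    ∀ᵐ t ∂volume.restrict (Icc 0 T), |u t| ≤ 1 :=
  ae_restrict_of_forall_mem measurableSet_Icc hu

lemma MagBdd.L1Norm_le_L0Norm {T : ℝ} {u : ℝ → ℝ} (hu : MagBdd T u) :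
    L1Norm T u ≤ L0Norm T u :=
  (integral_norm_le_measureReal_support hu.ae_restrict).trans_eq
    (L0Norm_eq_measureReal_support T u).symm

variable {n : ℕ} {T : ℝ} {A : Matrix (Fin n) (Fin n) ℝ} {B : Fin n → ℝ} {ξ : Fin n → ℝ}

theorem Admissible.exists_L0Norm_le_L1Norm {u : ℝ → ℝ} (hu : Admissible n T A B ξ u) :
    ∃ u', Admissible n T A B ξ u' ∧ L0Norm T u' ≤ L1Norm T u := by
  obtain ⟨hu_meas, hu1, huξ⟩ := hu
  have hk : MemLp (fun s ↦ (NormedSpace.exp ((-s) • A)).mulVec B) 2 (volume.restrict (Icc 0 T)) :=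
    memLp_restrict_of_continuousOn (continuous_exp_neg_smul_mulVec A B).continuousOn isCompact_Icc
      measurableSet_Icc
  obtain ⟨u', hu'_meas, hu'1, hu'_int, hu'_supp⟩ :=
    exists_integral_smul_eq_measureReal_support_le hk hu_meas hu1.ae_restrict
  exact ⟨u', ⟨hu'_meas, fun t _ ↦ hu'1 t, hu'_int.trans huξ⟩,
    (L0Norm_eq_measureReal_support T u').trans_le hu'_supp⟩

end HandsOffControl

theorem value_function_L0_eq_L1_general (n : ℕ) (T : ℝ) (A : Matrix (Fin n) (Fin n) ℝ)
    (B : Fin n → ℝ) : ∀ ξ ∈ Reach n T A B, V0 n T A B ξ = V1 n T A B ξ := by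
  intro ξ _
  refine csInf_eq_csInf_of_forall_exists_le ?_ ?_
  · rintro _ ⟨u, hu, rfl⟩
    exact ⟨_, ⟨u, hu, rfl⟩, hu.2.1.L1Norm_le_L0Norm⟩
  · rintro _ ⟨u, hu, rfl⟩
    obtain ⟨u', hu', h_le⟩ := hu.exists_L0Norm_le_L1Norm
    exact ⟨_, ⟨u', hu', rfl⟩, h_le⟩

theorem value_function_L0_eq_L1 (n : ℕ) (T : ℝ) (hT : 0 < T)
    (A : Matrix (Fin n) (Fin n) ℝ) (B : Fin n → ℝ)
    (hctrb : (ctrbMatrix n A B).rank = n) (hA : A.det ≠ 0) :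
    ∀ ξ ∈ Reach n T A B, V0 n T A B ξ = V1 n T A B ξ :=
  value_function_L0_eq_L1_general n T A B
end
end

section
/- Suppose the pair (A,B) is controllable (the controllability matrix [B, AB, …, A^{n-1}B] has rank n) and A is nonsingular. Then the value function V of the maximum hands-off control problem is continuous on the reachable set R. -/
open MeasureTheory Set

noncomputable section

/-!
By Hahn–Banach, a linear functional `f` on the state space turns the end-point constraint into a
switching function `f ∘ g`, and normality makes every weight built from it positive almost
everywhere.

At an interior point `x` of the reachable set, let `f` be a subgradient of the `L¹` value function,
which is convex, hence continuous there. For `|v| ≤ 1`, the Lagrangian `|v| - v q` exceeds its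
minimum, attained by the bang-off-bang law, by at least `||q| - 1|` times the distance of `v` to the
minimiser. Hence any `L¹`-minimising sequence of controls reaching `x` converges to the
bang-off-bang control of `f`, which is therefore `L¹`-optimal for `x`. Its values lie in
`{-1, 0, 1}`, so its `L⁰` and `L¹` costs agree; since `‖u‖₁ ≤ ‖u‖₀` always, the `L⁰` and `L¹` value
functions coincide on the interior.

At a boundary point `x`, let `f` support the reachable set. Then `∫ |f ∘ g| (1 - |u|)` is at most
the deficit `f x - f y` when `u` reaches `y`, so `|u|` tends to `1` as `y` tends to `x`, and both
the value at `x` and its limit are the total measure.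
-/

open Filter Topology

namespace HandsOff

section ConvexAnalysis

lemma nonempty_interior_strict_epigraph {X : Type*} [TopologicalSpace X] {C : Set X} {φ : X → ℝ}
    {x : X} (hx : x ∈ interior C) (hcont : ContinuousAt φ x) :
    (interior {p : X × ℝ | p.1 ∈ C ∧ φ p.1 < p.2}).Nonempty := by
  have hmem : ∀ᶠ p : X × ℝ in 𝓝 (x, φ x + 1), p.1 ∈ C :=
    continuousAt_fst.eventually (mem_interior_iff_mem_nhds.1 hx)
  have hlt : ∀ᶠ p : X × ℝ in 𝓝 (x, φ x + 1), φ p.1 < p.2 :=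
    (hcont.comp_of_eq continuousAt_fst rfl).eventually_lt continuousAt_snd (lt_add_one (φ x))
  exact ⟨_, mem_interior_iff_mem_nhds.2 (hmem.and hlt)⟩

variable {E : Type*} [NormedAddCommGroup E] [NormedSpace ℝ E]

lemma exists_subgradient {C : Set E} {φ : E → ℝ} (hφ : ConvexOn ℝ C φ) {x : E}
    (hx : x ∈ interior C) (hcont : ContinuousAt φ x) :
    ∃ f : E →L[ℝ] ℝ, ∀ z ∈ C, φ x + f (z - x) ≤ φ z := by
  obtain ⟨F, hF, hmax⟩ := geometric_hahn_banach_of_nonempty_interior_point (x := (x, φ x))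
    hφ.convex_strict_epigraph (fun h ↦ lt_irrefl _ (interior_subset h).2)
    (nonempty_interior_strict_epigraph hx hcont)
  set p : E →L[ℝ] ℝ := F.comp (.inl ℝ E ℝ) with hp
  set b : ℝ := F (0, 1) with hb
  have F_apply (z : E) (c : ℝ) : F (z, c) = p z + c * b := by
    rw [hp, hb, ← smul_eq_mul, ← map_smul]
    simp [← map_add]
  have hmax_graph {z : E} (hz : z ∈ C) {c : ℝ} (hc : φ z ≤ c) : p z + c * b ≤ p x + φ x * b := by
    have hlim : Tendsto (fun d ↦ p z + d * b) (𝓝[>] c) (𝓝 (p z + c * b)) :=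
      tendsto_nhdsWithin_of_tendsto_nhds (Continuous.tendsto (by fun_prop) c)
    refine le_of_tendsto hlim ?_
    filter_upwards [self_mem_nhdsWithin] with d hd
    simpa only [F_apply] using hmax (z, d) ⟨hz, hc.trans_lt hd⟩
  have hb_neg : b < 0 := by
    refine lt_of_le_of_ne ?_ fun hb_zero ↦ hF ?_
    · linarith [hmax_graph (interior_subset hx) (lt_add_one (φ x)).le]
    · have hloc : IsLocalMax p x := by
        filter_upwards [mem_interior_iff_mem_nhds.1 hx] with z hz
        simpa [hb_zero] using hmax_graph hz le_rfl
      have hp_zero : p = 0 := hloc.hasFDerivAt_eq_zero p.hasFDerivAt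
      ext z <;> simp [F_apply, hb_zero, hp_zero]
  refine ⟨(-b)⁻¹ • p, fun z hz ↦ ?_⟩
  have hdiv : (-b)⁻¹ * (p z - p x) ≤ φ z - φ x := by
    rw [inv_mul_le_iff₀ (neg_pos.2 hb_neg)]
    linarith [hmax_graph hz le_rfl]
  simpa [le_sub_iff_add_le'] using hdiv

lemma exists_supporting_functional [FiniteDimensional ℝ E] {C : Set E} (hC : Convex ℝ C) {x : E}
    (hxC : x ∈ C) (hx : x ∉ interior C) : ∃ f : E →L[ℝ] ℝ, f ≠ 0 ∧ ∀ z ∈ C, f z ≤ f x := by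
  by_cases hne : (interior C).Nonempty
  · exact geometric_hahn_banach_of_nonempty_interior_point hC hx hne
  · have hspan : vectorSpan ℝ C < ⊤ := by
      rwa [lt_top_iff_ne_top, ne_eq, ← direction_affineSpan,
        AffineSubspace.direction_eq_top_iff_of_nonempty ⟨x, subset_affineSpan ℝ C hxC⟩,
        ← hC.interior_nonempty_iff_affineSpan_eq_top]
    obtain ⟨f, hf, hker⟩ := Submodule.exists_le_ker_of_lt_top _ hspan
    refine ⟨LinearMap.toContinuousLinearMap f, by simpa using hf, fun z hz ↦ ?_⟩
    have hzx : f (z - x) = 0 := hker (vsub_mem_vectorSpan ℝ hz hxC)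
    exact (sub_eq_zero.1 (by simpa using hzx)).le

lemma convexOn_sInf_image_fiber {U X : Type*} [AddCommGroup U] [Module ℝ U] [AddCommGroup X]
    [Module ℝ X] {K : Set U} {J : U → ℝ} (hJ : ConvexOn ℝ K J) (hbdd : BddBelow (J '' K))
    {L : U → X}
    (hL : ∀ u ∈ K, ∀ v ∈ K, ∀ a b : ℝ, 0 ≤ a → 0 ≤ b → a + b = 1 →
      L (a • u + b • v) = a • L u + b • L v) :
    ConvexOn ℝ (L '' K) fun x ↦ sInf (J '' {u ∈ K | L u = x}) := by
  have comb_mem {u v : U} (hu : u ∈ K) (hv : v ∈ K) {a b : ℝ} (ha : 0 ≤ a) (hb : 0 ≤ b)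
      (hab : a + b = 1) : a • u + b • v ∈ {w ∈ K | L w = a • L u + b • L v} :=
    ⟨hJ.1 hu hv ha hb hab, hL u hu v hv a b ha hb hab⟩
  have bddBelow_fiber (x : X) : BddBelow (J '' {u ∈ K | L u = x}) :=
    hbdd.mono (image_mono (sep_subset _ _))
  have minimizing_seq {x : X} (hx : x ∈ L '' K) :=
    exists_seq_tendsto_sInf (Nonempty.image J (s := {u ∈ K | L u = x}) hx) (bddBelow_fiber x)
  refine ⟨?_, fun x hx y hy a b ha hb hab ↦ ?_⟩
  · rintro _ ⟨u, hu, rfl⟩ _ ⟨v, hv, rfl⟩ a b ha hb hab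
    exact ⟨_, comb_mem hu hv ha hb hab⟩
  · obtain ⟨α, -, hα, hα_mem⟩ := minimizing_seq hx
    obtain ⟨β, -, hβ, hβ_mem⟩ := minimizing_seq hy
    refine ge_of_tendsto' ((hα.const_mul a).add (hβ.const_mul b)) fun k ↦ ?_
    obtain ⟨u, ⟨hu, rfl⟩, huα⟩ := hα_mem k
    obtain ⟨v, ⟨hv, rfl⟩, hvβ⟩ := hβ_mem k
    rw [← huα, ← hvβ]
    exact (csInf_le (bddBelow_fiber _) (mem_image_of_mem J (comb_mem hu hv ha hb hab))).trans
      (hJ.2 hu hv ha hb hab)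

end ConvexAnalysis

section Controls

variable {Ω : Type*} [MeasurableSpace Ω] {μ : Measure Ω} {E : Type*} [NormedAddCommGroup E]
  [NormedSpace ℝ E]

lemma tendsto_integral_smul_of_tendsto_integral_weight_mul {ι : Type*} {l : Filter ι}
    [l.IsCountablyGenerated] {w : Ω → ℝ} (hw : Integrable w μ) (hw_pos : ∀ᵐ s ∂μ, 0 < w s)
    {F : ι → Ω → ℝ} {C : ℝ} (hF : ∀ i, AEStronglyMeasurable (F i) μ)
    (hFC : ∀ i, ∀ᵐ s ∂μ, |F i s| ≤ C)
    (hlim : Tendsto (fun i ↦ ∫ s, w s * |F i s| ∂μ) l (𝓝 0)) {h : Ω → E} (hh : Integrable h μ) :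
    Tendsto (fun i ↦ ∫ s, F i s • h s ∂μ) l (𝓝 0) := by
  have eLpNorm_weighted (i : ι) : eLpNorm ((fun s ↦ w s * F i s) - fun _ ↦ 0) 1 μ =
      ENNReal.ofReal (∫ s, w s * |F i s| ∂μ) := by
    rw [← Pi.zero_def, sub_zero, eLpNorm_one_eq_lintegral_enorm,
      ← ofReal_integral_norm_eq_lintegral_enorm (hw.mul_bdd (hF i) (hFC i))]
    congr 1
    refine integral_congr_ae ?_
    filter_upwards [hw_pos] with s hs
    simp [abs_of_pos hs]
  have weighted_in_measure : TendstoInMeasure μ (fun i s ↦ w s * F i s) l fun _ ↦ 0 := by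
    refine tendstoInMeasure_of_tendsto_eLpNorm one_ne_zero
      (fun i ↦ hw.aestronglyMeasurable.mul (hF i)) aestronglyMeasurable_const ?_
    simpa only [eLpNorm_weighted, ENNReal.ofReal_zero] using ENNReal.tendsto_ofReal hlim
  refine tendsto_of_subseq_tendsto fun ns hns ↦ ?_
  obtain ⟨ms, -, hms⟩ :=
    TendstoInMeasure.exists_seq_tendsto_ae fun ε hε ↦ (weighted_in_measure ε hε).comp hns
  refine ⟨ms, ?_⟩
  have hdom := tendsto_integral_of_dominated_convergence (μ := μ) (f := fun _ ↦ (0 : E))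
    (F := fun k s ↦ F (ns (ms k)) s • h s) (fun s ↦ C * ‖h s‖)
    (fun k ↦ (hF _).smul hh.aestronglyMeasurable) (hh.norm.const_mul C) ?_ ?_
  · simpa using hdom
  · intro k
    filter_upwards [hFC (ns (ms k))] with s hs
    rw [norm_smul]
    exact mul_le_mul_of_nonneg_right hs (norm_nonneg _)
  · filter_upwards [hms, hw_pos] with s hs hws
    have hFs : Tendsto (fun k ↦ F (ns (ms k)) s) atTop (𝓝 0) := by
      simpa [hws.ne'] using hs.const_mul (w s)⁻¹
    simpa using hFs.smul_const (h s)

/-- Controls satisfying the magnitude constraint `‖u‖_∞ ≤ 1`. Measurability and the bound are only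
required up to null sets, so that membership depends on the a.e. class of `u` alone. -/
def unitControls (μ : Measure Ω) : Set (Ω → ℝ) :=
  {u | AEMeasurable u μ ∧ ∀ᵐ s ∂μ, |u s| ≤ 1}

/-- The end-point map: the state reached by the control `u` through the kernel `g`. -/
def steer (μ : Measure Ω) (g : Ω → E) (u : Ω → ℝ) : E := ∫ s, u s • g s ∂μ

/-- The reachable set of the kernel `g`. -/
def reachable (μ : Measure Ω) (g : Ω → E) : Set E := steer μ g '' unitControls μ

/-- The hands-off cost `‖u‖₀`. -/
def l0Cost (μ : Measure Ω) (u : Ω → ℝ) : ℝ := μ.real {s | u s ≠ 0}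

/-- The fuel cost `‖u‖₁`. -/
def l1Cost (μ : Measure Ω) (u : Ω → ℝ) : ℝ := ∫ s, |u s| ∂μ

/-- The value function of the problem of reaching a given state at least cost `J`. -/
def optimalCost (μ : Measure Ω) (g : Ω → E) (J : (Ω → ℝ) → ℝ) (x : E) : ℝ :=
  sInf (J '' {u ∈ unitControls μ | steer μ g u = x})

/-- Normality of the kernel `g`, as in fuel-optimal control: no switching function `f ∘ g` stays
at one level on a set of positive measure. -/
def IsNormal (μ : Measure Ω) (g : Ω → E) : Prop :=
  ∀ f : E →L[ℝ] ℝ, f ≠ 0 → ∀ c : ℝ, ∀ᵐ s ∂μ, f (g s) ≠ c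

/-- The bang-off-bang switching law: `bangOffBang q` minimises `|v| - v * q` over `|v| ≤ 1`. -/
def bangOffBang (q : ℝ) : ℝ := if 1 < q then 1 else if q < -1 then -1 else 0

variable {g : Ω → E} {u v : Ω → ℝ}

lemma integrable_smul_of_mem_unitControls (hg : Integrable g μ) (hu : u ∈ unitControls μ) :
    Integrable (fun s ↦ u s • g s) μ :=
  hg.bdd_smul 1 hu.1.aestronglyMeasurable hu.2

lemma integrable_of_mem_unitControls [IsFiniteMeasure μ] (hu : u ∈ unitControls μ) :
    Integrable u μ :=
  .of_bound hu.1.aestronglyMeasurable 1 hu.2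

lemma convex_unitControls : Convex ℝ (unitControls μ) := by
  intro u hu v hv a b ha hb hab
  refine ⟨(hu.1.const_smul a).add (hv.1.const_smul b), ?_⟩
  filter_upwards [hu.2, hv.2] with s hus hvs
  have hball := convex_closedBall (0 : ℝ) 1 (mem_closedBall_zero_iff.2 hus)
    (mem_closedBall_zero_iff.2 hvs) ha hb hab
  exact mem_closedBall_zero_iff.1 hball

lemma steer_smul_add_smul (hg : Integrable g μ) (hu : u ∈ unitControls μ)
    (hv : v ∈ unitControls μ) (a b : ℝ) :
    steer μ g (a • u + b • v) = a • steer μ g u + b • steer μ g v := by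
  have hadd := integral_add ((integrable_smul_of_mem_unitControls hg hu).smul a)
    ((integrable_smul_of_mem_unitControls hg hv).smul b)
  simpa [steer, add_smul, mul_smul, integral_smul] using hadd

lemma integral_sub_smul_eq_steer_sub (hg : Integrable g μ) (hu : u ∈ unitControls μ)
    (hv : v ∈ unitControls μ) :
    ∫ s, (u s - v s) • g s ∂μ = steer μ g u - steer μ g v := by
  simp_rw [sub_smul]
  exact integral_sub (integrable_smul_of_mem_unitControls hg hu)
    (integrable_smul_of_mem_unitControls hg hv)

lemma apply_steer [CompleteSpace E] (f : E →L[ℝ] ℝ) (hg : Integrable g μ)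
    (hu : u ∈ unitControls μ) : f (steer μ g u) = ∫ s, u s * f (g s) ∂μ := by
  simpa [steer] using (f.integral_comp_comm (integrable_smul_of_mem_unitControls hg hu)).symm

lemma l0Cost_nonneg : 0 ≤ l0Cost μ u := measureReal_nonneg

lemma l1Cost_nonneg : 0 ≤ l1Cost μ u := integral_nonneg fun _ ↦ abs_nonneg _

lemma l0Cost_le_measureReal_univ [IsFiniteMeasure μ] : l0Cost μ u ≤ μ.real univ :=
  measureReal_mono (subset_univ _)

lemma nullMeasurableSet_ne_zero (hu : AEMeasurable u μ) : NullMeasurableSet {s | u s ≠ 0} μ :=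
  hu.nullMeasurableSet_preimage (measurableSet_singleton 0).compl

lemma l0Cost_eq_integral_indicator (hu : AEMeasurable u μ) :
    l0Cost μ u = ∫ s, {s | u s ≠ 0}.indicator (fun _ ↦ (1 : ℝ)) s ∂μ := by
  rw [integral_indicator₀ (nullMeasurableSet_ne_zero hu), setIntegral_const, smul_eq_mul, mul_one,
    l0Cost]

lemma l1Cost_le_l0Cost [IsFiniteMeasure μ] (hu : u ∈ unitControls μ) :
    l1Cost μ u ≤ l0Cost μ u := by
  rw [l0Cost_eq_integral_indicator hu.1]
  refine integral_mono_ae (integrable_of_mem_unitControls hu).abs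
    ((integrable_const 1).indicator₀
      (nullMeasurableSet_ne_zero hu.1)) ?_
  filter_upwards [hu.2] with s hs
  by_cases h : u s = 0 <;> simp [h, hs]

lemma l0Cost_eq_l1Cost_of_ternary (hu : AEMeasurable u μ)
    (hval : ∀ᵐ s ∂μ, u s = 0 ∨ |u s| = 1) :
    l0Cost μ u = l1Cost μ u := by
  rw [l0Cost_eq_integral_indicator hu]
  refine integral_congr_ae ?_
  filter_upwards [hval] with s hs
  by_cases h : u s = 0
  · simp [h]
  · simp [h, hs.resolve_left h]

lemma convexOn_l1Cost [IsFiniteMeasure μ] : ConvexOn ℝ (unitControls μ) (l1Cost μ) := by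
  refine ⟨convex_unitControls, fun u hu v hv a b ha hb hab ↦ ?_⟩
  have hu_int := (integrable_of_mem_unitControls hu).abs.const_mul a
  have hv_int := (integrable_of_mem_unitControls hv).abs.const_mul b
  simp_rw [smul_eq_mul, l1Cost, ← integral_const_mul]
  rw [← integral_add hu_int hv_int]
  refine integral_mono
    (integrable_of_mem_unitControls (convex_unitControls hu hv ha hb hab)).abs
    (hu_int.add hv_int) fun s ↦ ?_
  simpa [abs_mul, abs_of_nonneg ha, abs_of_nonneg hb] using abs_add_le (a * u s) (b * v s)

lemma steer_congr_ae (huv : u =ᵐ[μ] v) : steer μ g u = steer μ g v :=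
  integral_congr_ae (huv.mono fun s hs ↦ by simp only [hs])

lemma steer_neg : steer μ g (-u) = -steer μ g u := by
  simp [steer, integral_neg]

lemma l0Cost_congr_ae (huv : u =ᵐ[μ] v) : l0Cost μ u = l0Cost μ v :=
  measureReal_congr (eventuallyEq_set.2 (huv.mono fun s hs ↦ by simp [hs]))

lemma l0Cost_neg : l0Cost μ (-u) = l0Cost μ u := by
  simp [l0Cost]

lemma exists_measurable_abs_le_one_ae_eq (hu : u ∈ unitControls μ) :
    ∃ v, Measurable v ∧ (∀ s, |v s| ≤ 1) ∧ v =ᵐ[μ] u := by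
  refine ⟨fun s ↦ max (-1) (min (hu.1.mk u s) 1),
    measurable_const.max (hu.1.measurable_mk.min measurable_const), fun s ↦ ?_, ?_⟩
  · exact abs_le.2 ⟨le_max_left _ _, max_le (by norm_num) (min_le_right _ _)⟩
  · filter_upwards [hu.1.ae_eq_mk, hu.2] with s hs hs'
    rw [← hs, min_eq_left (abs_le.1 hs').2, max_eq_right (abs_le.1 hs').1]

lemma bddBelow_image_of_nonneg {α : Type*} {J : α → ℝ} (hJ : 0 ≤ J) (S : Set α) :
    BddBelow (J '' S) :=
  ⟨0, forall_mem_image.2 fun u _ ↦ hJ u⟩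

lemma optimalCost_le {J : (Ω → ℝ) → ℝ} (hJ : 0 ≤ J) (hu : u ∈ unitControls μ) :
    optimalCost μ g J (steer μ g u) ≤ J u :=
  csInf_le (bddBelow_image_of_nonneg hJ _) (mem_image_of_mem J ⟨hu, rfl⟩)

lemma le_optimalCost {J : (Ω → ℝ) → ℝ} {x : E} (hx : x ∈ reachable μ g) {c : ℝ}
    (hc : ∀ u ∈ unitControls μ, steer μ g u = x → c ≤ J u) : c ≤ optimalCost μ g J x :=
  le_csInf (Nonempty.image J hx) (forall_mem_image.2 fun u hu ↦ hc u hu.1 hu.2)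

lemma convexOn_optimalCost_l1Cost [IsFiniteMeasure μ] (hg : Integrable g μ) :
    ConvexOn ℝ (reachable μ g) (optimalCost μ g (l1Cost μ)) :=
  convexOn_sInf_image_fiber convexOn_l1Cost (bddBelow_image_of_nonneg (fun _ ↦ l1Cost_nonneg) _)
    fun _ hu _ hv a b _ _ _ ↦ steer_smul_add_smul hg hu hv a b

lemma optimalCost_l1Cost_le_l0Cost [IsFiniteMeasure μ] {x : E} (hx : x ∈ reachable μ g) :
    optimalCost μ g (l1Cost μ) x ≤ optimalCost μ g (l0Cost μ) x := by
  refine le_optimalCost hx fun u hu hux ↦ ?_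
  rw [← hux]
  exact (optimalCost_le (fun _ ↦ l1Cost_nonneg) hu).trans (l1Cost_le_l0Cost hu)

lemma bangOffBang_eq_zero_or_abs_eq_one (q : ℝ) : bangOffBang q = 0 ∨ |bangOffBang q| = 1 := by
  unfold bangOffBang
  split_ifs <;> simp

lemma measurable_bangOffBang : Measurable bangOffBang :=
  .ite measurableSet_Ioi measurable_const (.ite measurableSet_Iio measurable_const measurable_const)

lemma abs_mul_abs_sub_bangOffBang_le (q : ℝ) {v : ℝ} (hv : |v| ≤ 1) :
    |(|q| - 1)| * |v - bangOffBang q| ≤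
      (|v| - v * q) - (|bangOffBang q| - bangOffBang q * q) := by
  obtain ⟨hv_lower, hv_upper⟩ := abs_le.1 hv
  have hv_abs := le_abs_self v
  have hv_neg_abs := neg_abs_le v
  unfold bangOffBang
  split_ifs with hq_gt hq_lt
  · rw [abs_of_pos (zero_lt_one.trans hq_gt), abs_of_pos (sub_pos.2 hq_gt),
      abs_of_nonpos (sub_nonpos.2 hv_upper), abs_one]
    nlinarith
  · rw [abs_of_neg (by linarith : q < 0), abs_of_pos (by linarith : 0 < -q - 1),
      abs_of_nonneg (by linarith : 0 ≤ v - -1), abs_neg, abs_one]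
    nlinarith
  · have hq : |q| ≤ 1 := abs_le.2 ⟨not_lt.1 hq_lt, not_lt.1 hq_gt⟩
    have hvq : v * q ≤ |v| * |q| := (le_abs_self _).trans (abs_mul v q).le
    rw [abs_of_nonpos (sub_nonpos.2 hq), sub_zero, abs_zero]
    linarith

lemma bangOffBang_comp_mem_unitControls (hg : AEStronglyMeasurable g μ) (f : E →L[ℝ] ℝ) :
    bangOffBang ∘ f ∘ g ∈ unitControls μ := by
  refine ⟨measurable_bangOffBang.comp_aemeasurable
    (f.continuous.comp_aestronglyMeasurable hg).aemeasurable, .of_forall fun s ↦ ?_⟩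
  rcases bangOffBang_eq_zero_or_abs_eq_one (f (g s)) with h | h <;> simp [h]

lemma integral_abs_sub_mul_eq_lagrangian [IsFiniteMeasure μ] [CompleteSpace E]
    (f : E →L[ℝ] ℝ) (hg : Integrable g μ) (hu : u ∈ unitControls μ) :
    ∫ s, (|u s| - u s * f (g s)) ∂μ = l1Cost μ u - f (steer μ g u) := by
  rw [apply_steer f hg hu, l1Cost]
  exact integral_sub (integrable_of_mem_unitControls hu).abs
    (integrable_smul_of_mem_unitControls (f.integrable_comp hg) hu)

lemma integral_weight_mul_abs_sub_bangOffBang_le [IsFiniteMeasure μ] [CompleteSpace E]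
    (f : E →L[ℝ] ℝ) (hg : Integrable g μ) (hu : u ∈ unitControls μ) :
    ∫ s, |(|f (g s)| - 1)| * |u s - (bangOffBang ∘ f ∘ g) s| ∂μ ≤
      (l1Cost μ u - f (steer μ g u)) -
        (l1Cost μ (bangOffBang ∘ f ∘ g) - f (steer μ g (bangOffBang ∘ f ∘ g))) := by
  have hb := bangOffBang_comp_mem_unitControls hg.aestronglyMeasurable f
  have integrable_lagrangian {v : Ω → ℝ} (hv : v ∈ unitControls μ) :
      Integrable (fun s ↦ |v s| - v s * f (g s)) μ :=
    (integrable_of_mem_unitControls hv).abs.sub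
      (integrable_smul_of_mem_unitControls (f.integrable_comp hg) hv)
  rw [← integral_abs_sub_mul_eq_lagrangian f hg hu, ← integral_abs_sub_mul_eq_lagrangian f hg hb,
    ← integral_sub (integrable_lagrangian hu) (integrable_lagrangian hb)]
  refine integral_mono_of_nonneg (.of_forall fun s ↦ by positivity)
    ((integrable_lagrangian hu).sub (integrable_lagrangian hb)) ?_
  filter_upwards [hu.2] with s hs using abs_mul_abs_sub_bangOffBang_le (f (g s)) hs

lemma IsNormal.ae_abs_apply_sub_one_pos (h : IsNormal μ g) (f : E →L[ℝ] ℝ) :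
    ∀ᵐ s ∂μ, 0 < |(|f (g s)| - 1)| := by
  rcases eq_or_ne f 0 with rfl | hf
  · simp
  · filter_upwards [h f hf 1, h f hf (-1)] with s hs hs'
    simp [sub_eq_zero, abs_eq, hs, hs']

lemma steer_bangOffBang_of_subgradient [IsFiniteMeasure μ] [CompleteSpace E]
    (hg : Integrable g μ) (hnormal : IsNormal μ g) {x : E} (hx : x ∈ reachable μ g)
    {f : E →L[ℝ] ℝ} (hf : ∀ z ∈ reachable μ g, optimalCost μ g (l1Cost μ) x + f (z - x) ≤
      optimalCost μ g (l1Cost μ) z) :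
    steer μ g (bangOffBang ∘ f ∘ g) = x := by
  have hb := bangOffBang_comp_mem_unitControls hg.aestronglyMeasurable f
  obtain ⟨c, -, hc, hc_mem⟩ := exists_seq_tendsto_sInf
    (Nonempty.image (l1Cost μ) (s := {u ∈ unitControls μ | steer μ g u = x}) hx)
    (bddBelow_image_of_nonneg (fun _ ↦ l1Cost_nonneg) _)
  choose u hu huc using hc_mem
  have gap_le (k : ℕ) : ∫ s, |(|f (g s)| - 1)| * |u k s - (bangOffBang ∘ f ∘ g) s| ∂μ ≤
      c k - optimalCost μ g (l1Cost μ) x := by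
    have hsub := (hf _ (mem_image_of_mem _ hb)).trans (optimalCost_le (fun _ ↦ l1Cost_nonneg) hb)
    have hgap := integral_weight_mul_abs_sub_bangOffBang_le f hg (hu k).1
    rw [(hu k).2, huc k] at hgap
    rw [map_sub] at hsub
    linarith
  have gap_tendsto : Tendsto
      (fun k ↦ ∫ s, |(|f (g s)| - 1)| * |u k s - (bangOffBang ∘ f ∘ g) s| ∂μ) atTop (𝓝 0) :=
    squeeze_zero (fun k ↦ integral_nonneg fun s ↦ by positivity) gap_le
      (tendsto_sub_nhds_zero_iff.2 hc)
  have hdiff := tendsto_integral_smul_of_tendsto_integral_weight_mul (C := 2)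
    ((f.integrable_comp hg).abs.sub (integrable_const 1)).abs
    (hnormal.ae_abs_apply_sub_one_pos f)
    (fun k ↦ ((hu k).1.1.sub hb.1).aestronglyMeasurable) ?_ gap_tendsto hg
  · have hsteer (k : ℕ) : ∫ s, (u k s - (bangOffBang ∘ f ∘ g) s) • g s ∂μ =
        x - steer μ g (bangOffBang ∘ f ∘ g) := by
      rw [integral_sub_smul_eq_steer_sub hg (hu k).1 hb, (hu k).2]
    have hzero := tendsto_nhds_unique (hdiff.congr hsteer) tendsto_const_nhds
    exact (sub_eq_zero.1 hzero.symm).symm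
  · intro k
    filter_upwards [(hu k).1.2, hb.2] with s hs hs'
    exact (abs_sub _ _).trans (by linarith)

lemma l1Cost_bangOffBang_le_optimalCost [IsFiniteMeasure μ] [CompleteSpace E]
    (hg : Integrable g μ) (f : E →L[ℝ] ℝ) :
    l1Cost μ (bangOffBang ∘ f ∘ g) ≤
      optimalCost μ g (l1Cost μ) (steer μ g (bangOffBang ∘ f ∘ g)) := by
  have hb := bangOffBang_comp_mem_unitControls hg.aestronglyMeasurable f
  refine le_optimalCost (mem_image_of_mem _ hb) fun u hu hux ↦ ?_
  have hgap_nonneg : 0 ≤ ∫ s, |(|f (g s)| - 1)| * |u s - (bangOffBang ∘ f ∘ g) s| ∂μ :=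
    integral_nonneg fun s ↦ by positivity
  have hgap := integral_weight_mul_abs_sub_bangOffBang_le f hg hu
  rw [hux] at hgap
  linarith

theorem optimalCost_l0Cost_eq_l1Cost [IsFiniteMeasure μ] [FiniteDimensional ℝ E]
    (hg : Integrable g μ) (hnormal : IsNormal μ g) {x : E} (hx : x ∈ interior (reachable μ g)) :
    optimalCost μ g (l0Cost μ) x = optimalCost μ g (l1Cost μ) x := by
  have : CompleteSpace E := FiniteDimensional.complete ℝ E
  have hxR := interior_subset hx
  have hconvex := convexOn_optimalCost_l1Cost hg
  obtain ⟨f, hf⟩ := exists_subgradient hconvex hx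
    (hconvex.continuousOn_interior.continuousAt (isOpen_interior.mem_nhds hx))
  have hb := bangOffBang_comp_mem_unitControls hg.aestronglyMeasurable f
  refine le_antisymm ?_ (optimalCost_l1Cost_le_l0Cost hxR)
  rw [← steer_bangOffBang_of_subgradient hg hnormal hxR hf]
  calc optimalCost μ g (l0Cost μ) (steer μ g (bangOffBang ∘ f ∘ g))
      ≤ l0Cost μ (bangOffBang ∘ f ∘ g) := optimalCost_le (fun _ ↦ l0Cost_nonneg) hb
    _ = l1Cost μ (bangOffBang ∘ f ∘ g) :=
        l0Cost_eq_l1Cost_of_ternary hb.1 (.of_forall fun _ ↦ bangOffBang_eq_zero_or_abs_eq_one _)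
    _ ≤ _ := l1Cost_bangOffBang_le_optimalCost hg f

lemma exists_apply_steer_eq_integral_abs [CompleteSpace E] (hg : Integrable g μ)
    (f : E →L[ℝ] ℝ) : ∃ u ∈ unitControls μ, f (steer μ g u) = ∫ s, |f (g s)| ∂μ := by
  let sgn (q : ℝ) : ℝ := if 0 ≤ q then 1 else -1
  have sgn_measurable : Measurable sgn :=
    .ite measurableSet_Ici measurable_const measurable_const
  have abs_sgn (q : ℝ) : |sgn q| = 1 := by
    unfold sgn
    split_ifs <;> simp
  have sgn_mul_self (q : ℝ) : sgn q * q = |q| := by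
    unfold sgn
    split_ifs with hq
    · rw [one_mul, abs_of_nonneg hq]
    · rw [neg_one_mul, abs_of_neg (not_le.1 hq)]
  have hmem : sgn ∘ f ∘ g ∈ unitControls μ :=
    ⟨sgn_measurable.comp_aemeasurable (f.integrable_comp hg).aemeasurable,
      .of_forall fun s ↦ (abs_sgn _).le⟩
  refine ⟨_, hmem, ?_⟩
  simp [apply_steer f hg hmem, sgn_mul_self]

lemma integral_abs_mul_one_sub_abs_le [CompleteSpace E] (hg : Integrable g μ)
    {x : E} {f : E →L[ℝ] ℝ} (hf : ∀ z ∈ reachable μ g, f z ≤ f x) (hu : u ∈ unitControls μ) :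
    ∫ s, |f (g s)| * |(1 - |u s|)| ∂μ ≤ f x - f (steer μ g u) := by
  have hfg : Integrable (fun s ↦ f (g s)) μ := f.integrable_comp hg
  have hufg : Integrable (fun s ↦ u s * f (g s)) μ := integrable_smul_of_mem_unitControls hfg hu
  obtain ⟨v, hv, hv_eq⟩ := exists_apply_steer_eq_integral_abs hg f
  calc ∫ s, |f (g s)| * |(1 - |u s|)| ∂μ
      ≤ ∫ s, (|f (g s)| - u s * f (g s)) ∂μ := by
        refine integral_mono_of_nonneg (.of_forall fun s ↦ by positivity) (hfg.abs.sub hufg) ?_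
        filter_upwards [hu.2] with s hs
        rw [abs_of_nonneg (sub_nonneg.2 hs), mul_one_sub, ← abs_mul, mul_comm (f (g s))]
        exact sub_le_sub_left (le_abs_self _) _
    _ = f (steer μ g v) - f (steer μ g u) := by
        rw [integral_sub hfg.abs hufg, hv_eq, apply_steer f hg hu]
    _ ≤ f x - f (steer μ g u) := sub_le_sub_right (hf _ (mem_image_of_mem _ hv)) _

lemma tendsto_l1Cost_of_supporting [IsFiniteMeasure μ] [CompleteSpace E] (hg : Integrable g μ)
    {x : E} {f : E →L[ℝ] ℝ} (hf : ∀ z ∈ reachable μ g, f z ≤ f x)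
    (hfg : ∀ᵐ s ∂μ, f (g s) ≠ 0) :
    Tendsto (fun u : unitControls μ ↦ l1Cost μ u)
      (comap (fun u : unitControls μ ↦ steer μ g u) (𝓝 x)) (𝓝 (μ.real univ)) := by
  have deficit_tendsto : Tendsto (fun u : unitControls μ ↦ f x - f (steer μ g u))
      (comap (fun u : unitControls μ ↦ steer μ g u) (𝓝 x)) (𝓝 0) := by
    have hcont : Tendsto (fun y ↦ f x - f y) (𝓝 x) (𝓝 (f x - f x)) :=
      Continuous.tendsto (by fun_prop) x
    rw [sub_self] at hcont
    exact hcont.comp tendsto_comap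
  have weighted_tendsto : Tendsto (fun u : unitControls μ ↦ ∫ s, |f (g s)| * |(1 - |u.1 s|)| ∂μ)
      (comap (fun u : unitControls μ ↦ steer μ g u) (𝓝 x)) (𝓝 0) :=
    squeeze_zero (fun u ↦ integral_nonneg fun s ↦ by positivity)
      (fun u ↦ integral_abs_mul_one_sub_abs_le hg hf u.2) deficit_tendsto
  have hlim := tendsto_integral_smul_of_tendsto_integral_weight_mul (C := 1)
    (f.integrable_comp hg).abs (hfg.mono fun s hs ↦ abs_pos.2 hs)
    (fun u ↦ (u.2.1.abs.const_sub 1).aestronglyMeasurable) (fun u ↦ ?_) weighted_tendsto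
    (integrable_const (1 : ℝ))
  · have l1Cost_eq (u : unitControls μ) :
        μ.real univ - ∫ s, (1 - |u.1 s|) • (1 : ℝ) ∂μ = l1Cost μ u := by
      simp [integral_sub (integrable_const 1) (integrable_of_mem_unitControls u.2).abs, l1Cost]
    simpa only [l1Cost_eq, sub_zero] using hlim.const_sub (μ.real univ)
  · filter_upwards [u.2.2] with s hs
    rw [abs_of_nonneg (sub_nonneg.2 hs)]
    linarith [abs_nonneg (u.1 s)]

lemma tendsto_optimalCost_l0Cost_of_tendsto_l1Cost [IsFiniteMeasure μ] {x : E}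
    (hlim : Tendsto (fun u : unitControls μ ↦ l1Cost μ u)
      (comap (fun u : unitControls μ ↦ steer μ g u) (𝓝 x)) (𝓝 (μ.real univ))) :
    Tendsto (optimalCost μ g (l0Cost μ)) (𝓝[reachable μ g] x) (𝓝 (μ.real univ)) := by
  refine tendsto_order.2 ⟨fun a ha ↦ ?_, fun a ha ↦ ?_⟩
  · obtain ⟨b, hab, hb⟩ := exists_between ha
    have hnear := (eventually_comap.1 (hlim.eventually_const_lt hb)).filter_mono
      (nhdsWithin_le_nhds (s := reachable μ g))
    filter_upwards [hnear, self_mem_nhdsWithin] with y hy hyR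
    refine hab.trans_le (le_optimalCost hyR fun u hu huy ↦ ?_)
    exact (hy ⟨u, hu⟩ huy).le.trans (l1Cost_le_l0Cost hu)
  · filter_upwards [self_mem_nhdsWithin]
    rintro _ ⟨u, hu, rfl⟩
    exact ((optimalCost_le (fun _ ↦ l0Cost_nonneg) hu).trans l0Cost_le_measureReal_univ).trans_lt ha

end Controls

section ExpKernel

variable {ι : Type*} [Fintype ι] [DecidableEq ι]

/-- The kernel `s ↦ e^{-As} B` of the linear system `ẋ = Ax + Bu`. -/
def expKernel (A : Matrix ι ι ℝ) (B : ι → ℝ) (s : ℝ) : ι → ℝ :=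
  (NormedSpace.exp ((-s) • A)).mulVec B

variable {A : Matrix ι ι ℝ} {B : ι → ℝ}

section

attribute [local instance] Matrix.linftyOpNormedRing Matrix.linftyOpNormedAlgebra

lemma hasDerivAt_expKernel (s : ℝ) :
    HasDerivAt (expKernel A B) (-(A.mulVec (expKernel A B s))) s := by
  have hexp := (hasDerivAt_exp_smul_const' (𝕂 := ℝ) A (-s)).scomp s (hasDerivAt_neg s)
  have hmul := (LinearMap.toContinuousLinearMap
    ((Matrix.mulVecBilin ℝ ℝ).flip B)).hasFDerivAt.comp_hasDerivAt s hexp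
  convert! hmul using 1
  rw [neg_one_smul, expKernel, Matrix.mulVec_mulVec, ← Matrix.neg_mulVec]
  rfl

lemma analyticOnNhd_expKernel : AnalyticOnNhd ℝ (expKernel A B) univ := fun s _ ↦
  have hexp : AnalyticAt ℝ (fun s : ℝ ↦ NormedSpace.exp ((-s) • A)) s :=
    (NormedSpace.exp_analytic _).fun_comp (f := fun s : ℝ ↦ (-s) • A)
      (analyticAt_id.neg.smul analyticAt_const)
  ((LinearMap.toContinuousLinearMap ((Matrix.mulVecBilin ℝ ℝ).flip B)).analyticAt _).fun_comp hexp

end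

lemma continuous_expKernel : Continuous (expKernel A B) :=
  continuousOn_univ.1 analyticOnNhd_expKernel.continuousOn

lemma hasDerivAt_apply_pow_mulVec_expKernel (f : (ι → ℝ) →L[ℝ] ℝ) (k : ℕ) (s : ℝ) :
    HasDerivAt (fun s ↦ f ((A ^ k).mulVec (expKernel A B s)))
      (-f ((A ^ (k + 1)).mulVec (expKernel A B s))) s := by
  have h := (f.comp (LinearMap.toContinuousLinearMap (A ^ k).mulVecLin)).hasFDerivAt.comp_hasDerivAt
    s (hasDerivAt_expKernel (A := A) (B := B) s)
  simpa [Function.comp_def, pow_succ, Matrix.mulVec_mulVec, Matrix.mulVec_neg] using h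

lemma apply_pow_succ_mulVec_eq_zero_of_const {f : (ι → ℝ) →L[ℝ] ℝ} {c : ℝ}
    (hc : ∀ s, f (expKernel A B s) = c) (k : ℕ) : f ((A ^ (k + 1)).mulVec B) = 0 := by
  have deriv_step {k : ℕ} {c : ℝ} (hk : ∀ s, f ((A ^ k).mulVec (expKernel A B s)) = c) (s : ℝ) :
      f ((A ^ (k + 1)).mulVec (expKernel A B s)) = 0 := by
    have h := hasDerivAt_apply_pow_mulVec_expKernel (A := A) (B := B) f k s
    rw [funext hk] at h
    exact neg_eq_zero.1 (h.unique (hasDerivAt_const s c))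
  have all_zero (k : ℕ) : ∀ s, f ((A ^ (k + 1)).mulVec (expKernel A B s)) = 0 := by
    induction k with
    | zero => exact deriv_step (k := 0) (by simpa using hc)
    | succ k ih => exact deriv_step ih
  simpa [expKernel] using all_zero k 0

lemma exists_apply_expKernel_ne (hA : IsUnit A)
    (hspan : Submodule.span ℝ (range fun k : ℕ ↦ (A ^ k).mulVec B) = ⊤)
    {f : (ι → ℝ) →L[ℝ] ℝ} (hf : f ≠ 0) (c : ℝ) : ∃ s, f (expKernel A B s) ≠ c := by
  by_contra! hc
  have f_comp_A_zero : f.toLinearMap ∘ₗ A.mulVecLin = 0 := by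
    refine LinearMap.ext_on_range hspan fun k ↦ ?_
    simpa [Matrix.mulVec_mulVec, ← pow_succ'] using apply_pow_succ_mulVec_eq_zero_of_const hc k
  refine hf (ContinuousLinearMap.ext fun x ↦ ?_)
  obtain ⟨y, rfl⟩ := Matrix.mulVec_surjective_iff_isUnit.2 hA x
  exact LinearMap.congr_fun f_comp_A_zero y

theorem isNormal_expKernel (hA : IsUnit A)
    (hspan : Submodule.span ℝ (range fun k : ℕ ↦ (A ^ k).mulVec B) = ⊤)
    {μ : Measure ℝ} (hμ : μ ≪ volume) : IsNormal μ (expKernel A B) := by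
  intro f hf c
  obtain ⟨s, hs⟩ := exists_apply_expKernel_ne hA hspan hf c
  have hanalytic : AnalyticOnNhd ℝ (fun s ↦ f (expKernel A B s) - c) univ :=
    (f.comp_analyticOnNhd analyticOnNhd_expKernel).sub analyticOnNhd_const
  have hcodiscrete := hanalytic.preimage_zero_mem_codiscrete (x := s) (sub_ne_zero.2 hs)
  have hnull := ae_restrict_le_codiscreteWithin (μ := volume) MeasurableSet.univ hcodiscrete
  rw [Measure.restrict_univ] at hnull
  filter_upwards [hμ.ae_le hnull] with t ht
  simpa [sub_eq_zero] using ht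

end ExpKernel

section Bridge

variable {n : ℕ} {T : ℝ} {A : Matrix (Fin n) (Fin n) ℝ} {B : Fin n → ℝ} {u : ℝ → ℝ}

lemma span_pow_mulVec_eq_top (hctrb : (ctrbMatrix n A B).rank = n) :
    Submodule.span ℝ (range fun k : ℕ ↦ (A ^ k).mulVec B) = ⊤ := by
  have hcols : Submodule.span ℝ (range (ctrbMatrix n A B).col) = ⊤ := by
    apply Submodule.eq_top_of_finrank_eq
    rw [← Matrix.rank_eq_finrank_span_cols, hctrb, Module.finrank_fin_fun]
  refine eq_top_mono (Submodule.span_mono ?_) hcols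
  rintro _ ⟨j, rfl⟩
  exact ⟨j, rfl⟩

lemma L0Norm_eq_l0Cost : L0Norm T u = l0Cost (volume.restrict (Icc 0 T)) u := by
  rw [l0Cost, measureReal_restrict_apply' measurableSet_Icc, inter_comm]
  rfl

lemma mem_unitControls_of_magBdd (hu : Measurable u) (hbdd : MagBdd T u) :
    u ∈ unitControls (volume.restrict (Icc 0 T)) :=
  ⟨hu.aemeasurable, (ae_restrict_mem measurableSet_Icc).mono hbdd⟩

lemma reach_eq_reachable :
    Reach n T A B = reachable (volume.restrict (Icc 0 T)) (expKernel A B) := by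
  ext x
  constructor
  · rintro ⟨u, hu, hbdd, rfl⟩
    exact ⟨u, mem_unitControls_of_magBdd hu hbdd, rfl⟩
  · rintro ⟨u, hu, rfl⟩
    obtain ⟨v, hv, hbdd, hvu⟩ := exists_measurable_abs_le_one_ae_eq hu
    exact ⟨v, hv, fun s _ ↦ hbdd s, steer_congr_ae hvu.symm⟩

lemma admissible_neg_iff {ξ : Fin n → ℝ} :
    Admissible n T A B ξ (-u) ↔ Measurable u ∧ MagBdd T u ∧
      steer (volume.restrict (Icc 0 T)) (expKernel A B) u = ξ := by
  have hsteer : stateInt n T A B (-u) = -steer (volume.restrict (Icc 0 T)) (expKernel A B) u :=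
    steer_neg
  have hmeas : Measurable (-u) ↔ Measurable u := ⟨fun h ↦ by simpa using h.neg, .neg⟩
  simp [Admissible, MagBdd, hsteer, hmeas]

lemma V0_eq_optimalCost :
    V0 n T A B = optimalCost (volume.restrict (Icc 0 T)) (expKernel A B)
      (l0Cost (volume.restrict (Icc 0 T))) := by
  funext ξ
  refine congrArg sInf (Subset.antisymm ?_ ?_)
  · rintro _ ⟨u, hu, rfl⟩
    rw [← neg_neg u, admissible_neg_iff] at hu
    refine ⟨-u, ⟨mem_unitControls_of_magBdd hu.1 hu.2.1, hu.2.2⟩, ?_⟩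
    rw [L0Norm_eq_l0Cost, l0Cost_neg]
  · rintro _ ⟨u, ⟨hu, hux⟩, rfl⟩
    obtain ⟨v, hv, hbdd, hvu⟩ := exists_measurable_abs_le_one_ae_eq hu
    refine ⟨-v, admissible_neg_iff.2 ⟨hv, fun s _ ↦ hbdd s, (steer_congr_ae hvu).trans hux⟩, ?_⟩
    rw [L0Norm_eq_l0Cost, l0Cost_neg, l0Cost_congr_ae hvu]

end Bridge

end HandsOff

open HandsOff

theorem value_function_continuousOn_general {Ω : Type*} [MeasurableSpace Ω] {μ : Measure Ω}
    [IsFiniteMeasure μ] {E : Type*} [NormedAddCommGroup E] [NormedSpace ℝ E]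
    [FiniteDimensional ℝ E] {g : Ω → E} (hg : Integrable g μ) (hnormal : IsNormal μ g) :
    ContinuousOn (optimalCost μ g (l0Cost μ)) (reachable μ g) := by
  have : CompleteSpace E := FiniteDimensional.complete ℝ E
  have hconvex := convexOn_optimalCost_l1Cost hg
  intro x hxR
  by_cases hx : x ∈ interior (reachable μ g)
  · have hcont : ContinuousAt (optimalCost μ g (l1Cost μ)) x :=
      hconvex.continuousOn_interior.continuousAt (isOpen_interior.mem_nhds hx)
    refine (hcont.congr ?_).continuousWithinAt
    filter_upwards [isOpen_interior.mem_nhds hx] with y hy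
    exact (optimalCost_l0Cost_eq_l1Cost hg hnormal hy).symm
  · obtain ⟨f, hf, hmax⟩ := exists_supporting_functional hconvex.1 hxR hx
    have hlim := tendsto_optimalCost_l0Cost_of_tendsto_l1Cost
      (tendsto_l1Cost_of_supporting hg hmax (hnormal f hf 0))
    have hval := tendsto_nhds_unique (tendsto_pure_nhds _ x)
      (hlim.mono_left (pure_le_nhdsWithin hxR))
    rwa [ContinuousWithinAt, hval]

theorem value_function_continuousOn (n : ℕ) (T : ℝ) (hT : 0 < T)
    (A : Matrix (Fin n) (Fin n) ℝ) (B : Fin n → ℝ)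
    (hctrb : (ctrbMatrix n A B).rank = n) (hA : A.det ≠ 0) :
    ContinuousOn (V0 n T A B) (Reach n T A B) := by
  rw [V0_eq_optimalCost, reach_eq_reachable]
  exact value_function_continuousOn_general continuous_expKernel.integrableOn_Icc
    (isNormal_expKernel (A.isUnit_iff_isUnit_det.2 hA.isUnit) (span_pow_mulVec_eq_top hctrb)
      Measure.absolutelyContinuous_restrict)
end
end

section
/- Suppose the pair (A,B) is controllable (the controllability matrix [B, AB, …, A^{n-1}B] has rank n) and A is nonsingular. Then the extended value function V̄ defined on ℝⁿ by V̄(ξ) = V(ξ) for ξ ∈ R and V̄(ξ) = T for ξ ∉ R is upper semi-continuous on ℝⁿ, i.e., for every α ∈ ℝ the set {ξ ∈ ℝⁿ : V̄(ξ) < α} is open. -/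
open MeasureTheory Set

noncomputable section

open Classical in
/-- The extended value function `V̄`. -/
def Vbar (n : ℕ) (T : ℝ) (A : Matrix (Fin n) (Fin n) ℝ) (B : Fin n → ℝ)
    (ξ : Fin n → ℝ) : ℝ :=
  if ξ ∈ Reach n T A B then V0 n T A B ξ else T

/-!
If `V̄ ξ < α ≤ T`, some admissible `u` steers `ξ` to `0` with `‖u‖₀ < α ≤ T`, so `u` vanishes on a
subset of `[0, T]` of positive measure. Inside it choose `F` with `0 < |F| < α - ‖u‖₀`. The Gramian
`∫_F e^{-As} B Bᵀ e^{-Aᵀs} ds` is invertible: a functional `φ` in its kernel satisfies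
`φ (e^{-As} B) = 0` almost everywhere on `F`, hence for all `s` by analyticity, and differentiating
at `0` gives `φ (A ^ k B) = 0` for all `k`, so `φ = 0` by controllability. Small displacements of
`ξ` are therefore compensated by controls of magnitude at most `1` supported in `F`, which can be
added to `u` without violating its bound and raise the cost by at most `|F|`.
-/

open Filter
open scoped ENNReal Matrix Topology

section Gramian

variable {X E : Type*} [MeasurableSpace X] {ν : Measure X}
  [NormedAddCommGroup E] [NormedSpace ℝ E] {g : X → E}

lemma integrable_apply_smul (hg : MemLp g 2 ν) (φ : StrongDual ℝ E) :
    Integrable (fun s ↦ φ (g s) • g s) ν :=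
  memLp_one_iff_integrable.1 (hg.smul (φ.comp_memLp' hg))

/-- The Gramian `∫ g gᵀ dν` of a square-integrable vector-valued function `g`, encoded without
coordinates as the operator `φ ↦ ∫ φ(g) g dν` from the dual of `E` to `E`. -/
def gramian (hg : MemLp g 2 ν) : StrongDual ℝ E →ₗ[ℝ] E where
  toFun φ := ∫ s, φ (g s) • g s ∂ν
  map_add' φ ψ := by
    simp only [add_apply, add_smul]
    exact integral_add (integrable_apply_smul hg φ) (integrable_apply_smul hg ψ)
  map_smul' c φ := by
    simp only [smul_apply, smul_assoc, integral_smul, RingHom.id_apply]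

lemma gramian_apply (hg : MemLp g 2 ν) (φ : StrongDual ℝ E) :
    gramian hg φ = ∫ s, φ (g s) • g s ∂ν := rfl

lemma apply_gramian [CompleteSpace E] (hg : MemLp g 2 ν) (φ : StrongDual ℝ E) :
    φ (gramian hg φ) = ∫ s, φ (g s) ^ 2 ∂ν := by
  rw [gramian_apply, ← φ.integral_comp_comm (integrable_apply_smul hg φ)]
  simp only [map_smul, smul_eq_mul, sq]

lemma gramian_injective [CompleteSpace E] (hg : MemLp g 2 ν)
    (hnd : ∀ φ : StrongDual ℝ E, (∀ᵐ s ∂ν, φ (g s) = 0) → φ = 0) :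
    Function.Injective (gramian hg) := by
  refine (injective_iff_map_eq_zero _).2 fun φ hφ ↦ hnd φ ?_
  have hint : ∫ s, φ (g s) ^ 2 ∂ν = 0 := by rw [← apply_gramian hg, hφ, map_zero]
  have hsq := (integral_eq_zero_iff_of_nonneg (fun s ↦ sq_nonneg (φ (g s)))
    (φ.comp_memLp' hg).integrable_sq).1 hint
  filter_upwards [hsq] with s hs using pow_eq_zero_iff two_ne_zero |>.1 hs

lemma gramian_surjective [FiniteDimensional ℝ E] (hg : MemLp g 2 ν)
    (hnd : ∀ φ : StrongDual ℝ E, (∀ᵐ s ∂ν, φ (g s) = 0) → φ = 0) :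
    Function.Surjective (gramian hg) := by
  have : CompleteSpace E := FiniteDimensional.complete ℝ E
  have hdim : Module.finrank ℝ (StrongDual ℝ E) = Module.finrank ℝ E :=
    LinearMap.toContinuousLinearMap.finrank_eq.symm.trans Subspace.dual_finrank_eq
  exact (LinearMap.injective_iff_surjective_of_finrank_eq_finrank hdim).1
    (gramian_injective hg hnd)

end Gramian

section Measure

lemma exists_subset_measure_ne_zero_lt {X : Type*} [MeasurableSpace X] [TopologicalSpace X]
    [SecondCountableTopology X] [OpensMeasurableSpace X] {μ : Measure X} [μ.OuterRegular]
    [NullSingletonClass μ] {s : Set X} (hs : MeasurableSet s) (hμs : μ s ≠ 0)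
    {ε : ℝ≥0∞} (hε : ε ≠ 0) :
    ∃ t ⊆ s, MeasurableSet t ∧ μ t ≠ 0 ∧ μ t < ε := by
  obtain ⟨x, -, hx⟩ := exists_mem_forall_mem_nhdsWithin_pos_measure hμs
  obtain ⟨U, hxU, hU, hμU⟩ := ({x} : Set X).exists_isOpen_lt_of_lt (μ := μ) ε
    (by rwa [measure_singleton, pos_iff_ne_zero])
  have hmem : s ∩ U ∈ 𝓝[s] x :=
    inter_mem self_mem_nhdsWithin (mem_nhdsWithin_of_mem_nhds (hU.mem_nhds (hxU rfl)))
  exact ⟨s ∩ U, inter_subset_left, hs.inter hU.measurableSet, (hx _ hmem).ne',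
    (measure_mono inter_subset_right).trans_lt hμU⟩

lemma memLp_restrict_of_isCompact {X E : Type*} [MeasurableSpace X] [TopologicalSpace X]
    [OpensMeasurableSpace X] {μ : Measure X} [IsFiniteMeasureOnCompacts μ]
    [NormedAddCommGroup E] {f : X → E} {K : Set X}
    (hf : ContinuousOn f K) (hK : IsCompact K) (hKm : MeasurableSet K) (p : ℝ≥0∞) :
    MemLp f p (μ.restrict K) := by
  have : IsFiniteMeasure (μ.restrict K) := isFiniteMeasure_restrict.2 hK.measure_lt_top.ne
  obtain ⟨C, hC⟩ := hK.exists_bound_of_continuousOn hf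
  exact .of_bound (hf.aestronglyMeasurable_of_isCompact hK hKm) C
    ((ae_restrict_iff' hKm).2 (.of_forall hC))

lemma ae_ne_zero_of_analyticOnNhd {𝕜 E : Type*} [NontriviallyNormedField 𝕜] [ConnectedSpace 𝕜]
    [SecondCountableTopology 𝕜] [MeasurableSpace 𝕜] {μ : Measure 𝕜} [NullSingletonClass μ]
    [NormedAddCommGroup E] [NormedSpace 𝕜 E] {f : 𝕜 → E} (hf : AnalyticOnNhd 𝕜 f univ)
    {x : 𝕜} (hx : f x ≠ 0) : ∀ᵐ t ∂μ, f t ≠ 0 := by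
  have hle := ae_restrict_le_codiscreteWithin (μ := μ) MeasurableSet.univ
  rw [Measure.restrict_univ] at hle
  exact hle (hf.preimage_zero_mem_codiscrete hx)

end Measure

section MatrixExponential

variable {ι : Type*} [Fintype ι] [DecidableEq ι] (A : Matrix ι ι ℝ) (C : ι → ℝ)

open scoped Matrix.Norms.Operator in
lemma hasDerivAt_exp_smul_mulVec (t : ℝ) :
    HasDerivAt (fun t : ℝ ↦ NormedSpace.exp (t • A) *ᵥ C)
      (NormedSpace.exp (t • A) *ᵥ (A *ᵥ C)) t := by
  rw [Matrix.mulVec_mulVec]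
  exact (LinearMap.toContinuousLinearMap
    ((Matrix.mulVecBilin ℝ ℝ).flip C)).hasFDerivAt.comp_hasDerivAt t (hasDerivAt_exp_smul_const A t)

open scoped Matrix.Norms.Operator in
lemma analyticOnNhd_exp_smul_mulVec :
    AnalyticOnNhd ℝ (fun t : ℝ ↦ NormedSpace.exp (t • A) *ᵥ C) univ := by
  have hexp : AnalyticOnNhd ℝ (fun t : ℝ ↦ NormedSpace.exp (t • A)) univ := fun t _ ↦
    AnalyticAt.comp (g := NormedSpace.exp) (NormedSpace.exp_analytic (𝕂 := ℝ) (t • A))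
      (by fun_prop)
  exact (LinearMap.toContinuousLinearMap
    ((Matrix.mulVecBilin ℝ ℝ).flip C)).comp_analyticOnNhd hexp

variable {A C}

lemma apply_pow_mulVec_eq_zero {φ : StrongDual ℝ (ι → ℝ)}
    (h : ∀ t : ℝ, φ (NormedSpace.exp (t • A) *ᵥ C) = 0) (k : ℕ) : φ ((A ^ k) *ᵥ C) = 0 := by
  induction k generalizing C with
  | zero => simpa using h 0
  | succ k ih =>
    rw [pow_succ, ← Matrix.mulVec_mulVec]
    refine ih fun t ↦ ?_
    have hderiv := φ.hasFDerivAt.comp_hasDerivAt t (hasDerivAt_exp_smul_mulVec A C t)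
    have hconst : (φ ∘ fun t ↦ NormedSpace.exp (t • A) *ᵥ C) = fun _ ↦ 0 := funext h
    rw [hconst] at hderiv
    exact hderiv.unique (hasDerivAt_const t 0)

end MatrixExponential

section InputKernel

variable {ι : Type*} [Fintype ι] [DecidableEq ι] (A : Matrix ι ι ℝ) (B : ι → ℝ)

/-- The response `e^{-As} B` of the steering integral to an impulse at time `s`: the integrand
of `stateInt` is `u s • inputKernel A B s`. -/
def inputKernel (s : ℝ) : ι → ℝ :=
  NormedSpace.exp ((-s) • A) *ᵥ B

lemma analyticOnNhd_inputKernel : AnalyticOnNhd ℝ (inputKernel A B) univ :=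
  (analyticOnNhd_exp_smul_mulVec A B).comp analyticOnNhd_id.neg (mapsTo_univ _ _)

lemma continuous_inputKernel : Continuous (inputKernel A B) :=
  continuousOn_univ.1 (analyticOnNhd_inputKernel A B).continuousOn

end InputKernel

section ControlSystem

variable {n : ℕ} {T : ℝ} {A : Matrix (Fin n) (Fin n) ℝ} {B : Fin n → ℝ} {ξ : Fin n → ℝ}
  {u v : ℝ → ℝ} {F : Set ℝ} {α : ℝ}

lemma eq_zero_of_forall_apply_inputKernel_eq_zero (hctrb : (ctrbMatrix n A B).rank = n)
    {φ : StrongDual ℝ (Fin n → ℝ)} (h : ∀ s, φ (inputKernel A B s) = 0) : φ = 0 := by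
  have hspan : Submodule.span ℝ (range (ctrbMatrix n A B).col) = ⊤ := by
    apply Submodule.eq_top_of_finrank_eq
    rw [← Matrix.rank_eq_finrank_span_cols, hctrb, Module.finrank_fin_fun]
  have hexp (t : ℝ) : φ (NormedSpace.exp (t • A) *ᵥ B) = 0 := by
    simpa only [inputKernel, neg_neg] using h (-t)
  refine ContinuousLinearMap.coe_injective (LinearMap.ext_on_range hspan fun k ↦ ?_)
  exact apply_pow_mulVec_eq_zero hexp k

lemma eq_zero_of_ae_apply_inputKernel_eq_zero (hctrb : (ctrbMatrix n A B).rank = n)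
    (hF : volume F ≠ 0) {φ : StrongDual ℝ (Fin n → ℝ)}
    (h : ∀ᵐ s ∂volume.restrict F, φ (inputKernel A B s) = 0) : φ = 0 := by
  refine eq_zero_of_forall_apply_inputKernel_eq_zero hctrb fun x ↦ ?_
  by_contra hx
  have han : AnalyticOnNhd ℝ (fun s ↦ φ (inputKernel A B s)) univ :=
    φ.comp_analyticOnNhd (analyticOnNhd_inputKernel A B)
  have hne := ae_ne_zero_of_analyticOnNhd (μ := volume.restrict F) han hx
  have : (ae (volume.restrict F)).NeBot :=
    ae_neBot.2 (Measure.restrict_eq_zero.not.2 hF)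
  obtain ⟨s, hs, hs'⟩ := (h.and hne).exists
  exact hs' hs

lemma memLp_inputKernel_restrict (hFT : F ⊆ Icc 0 T) :
    MemLp (inputKernel A B) 2 (volume.restrict F) :=
  (memLp_restrict_of_isCompact (continuous_inputKernel A B).continuousOn isCompact_Icc
    measurableSet_Icc 2).mono_measure (Measure.restrict_mono_set _ hFT)

lemma stateInt_eq_setIntegral (u : ℝ → ℝ) :
    stateInt n T A B u = ∫ s in Icc 0 T, u s • inputKernel A B s := rfl

lemma stateInt_neg (u : ℝ → ℝ) : stateInt n T A B (-u) = -stateInt n T A B u := by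
  simp only [stateInt_eq_setIntegral, Pi.neg_apply, neg_smul, integral_neg]

lemma integrableOn_smul_inputKernel (hu : Measurable u) (hb : MagBdd T u) :
    IntegrableOn (fun s ↦ u s • inputKernel A B s) (Icc 0 T) :=
  (continuous_inputKernel A B).integrableOn_Icc.bdd_smul 1 hu.aestronglyMeasurable
    ((ae_restrict_iff' measurableSet_Icc).2 (.of_forall hb))

lemma stateInt_add (hu : Measurable u) (hub : MagBdd T u) (hv : Measurable v)
    (hvb : MagBdd T v) :
    stateInt n T A B (u + v) = stateInt n T A B u + stateInt n T A B v := by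
  simp only [stateInt_eq_setIntegral, Pi.add_apply, add_smul]
  exact integral_add (integrableOn_smul_inputKernel hu hub) (integrableOn_smul_inputKernel hv hvb)

lemma stateInt_indicator (hF : MeasurableSet F) (hFT : F ⊆ Icc 0 T)
    (φ : StrongDual ℝ (Fin n → ℝ)) :
    stateInt n T A B (F.indicator fun s ↦ φ (inputKernel A B s)) =
      gramian (memLp_inputKernel_restrict (A := A) (B := B) hFT) φ := by
  simp only [stateInt_eq_setIntegral, ← indicator_smul_apply_left]
  rw [setIntegral_indicator hF, inter_eq_self_of_subset_right hFT, gramian_apply]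

lemma eventually_exists_stateInt_eq_of_support_subset (hctrb : (ctrbMatrix n A B).rank = n)
    (hF : MeasurableSet F) (hFT : F ⊆ Icc 0 T) (hF0 : volume F ≠ 0) :
    ∀ᶠ x in 𝓝 (0 : Fin n → ℝ), ∃ v, Measurable v ∧ MagBdd T v ∧ Function.support v ⊆ F ∧
      stateInt n T A B v = x := by
  set G := gramian (memLp_inputKernel_restrict (A := A) (B := B) hFT)
  have hG : IsOpenMap G := G.isOpenMap_of_finiteDimensional <|
    gramian_surjective _ fun _ ↦ eq_zero_of_ae_apply_inputKernel_eq_zero hctrb hF0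
  obtain ⟨C, hC⟩ := isCompact_Icc.exists_bound_of_continuousOn
    (continuous_inputKernel A B).continuousOn (s := Icc 0 T)
  have hcont : Continuous fun φ : StrongDual ℝ (Fin n → ℝ) ↦ ‖φ‖ * C := by fun_prop
  have hsmall : {φ : StrongDual ℝ (Fin n → ℝ) | ‖φ‖ * C < 1} ∈ 𝓝 0 :=
    (isOpen_lt hcont continuous_const).mem_nhds (by simp)
  have himage : G '' {φ | ‖φ‖ * C < 1} ∈ 𝓝 0 := map_zero G ▸ hG.image_mem_nhds hsmall
  filter_upwards [himage]
  rintro _ ⟨φ, hφ, rfl⟩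
  refine ⟨F.indicator fun s ↦ φ (inputKernel A B s),
    (φ.continuous.comp (continuous_inputKernel A B)).measurable.indicator hF, fun t ht ↦ ?_,
    support_indicator_subset, stateInt_indicator hF hFT φ⟩
  calc |F.indicator (fun s ↦ φ (inputKernel A B s)) t|
      ≤ ‖φ (inputKernel A B t)‖ := norm_indicator_le_norm_self (fun s ↦ φ (inputKernel A B s)) t
    _ ≤ ‖φ‖ * C := φ.le_opNorm_of_le (hC t ht)
    _ ≤ 1 := le_of_lt hφ

lemma L0Norm_nonneg (T : ℝ) (u : ℝ → ℝ) : 0 ≤ L0Norm T u := ENNReal.toReal_nonneg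

lemma L0Norm_le (hT : 0 ≤ T) (u : ℝ → ℝ) : L0Norm T u ≤ T :=
  calc L0Norm T u ≤ volume.real (Icc 0 T) :=
      measureReal_mono (sep_subset _ _) measure_Icc_lt_top.ne
    _ = T := by rw [Real.volume_real_Icc_of_le hT, sub_zero]

lemma volume_zeros_ne_zero (h : L0Norm T u < T) : volume {t ∈ Icc 0 T | u t = 0} ≠ 0 := by
  intro hzero
  refine h.not_ge ?_
  calc T ≤ volume.real (Icc 0 T) := by simp
    _ ≤ volume.real ({t ∈ Icc 0 T | u t = 0} ∪ {t ∈ Icc 0 T | u t ≠ 0}) :=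
      measureReal_mono (fun t ht ↦ (eq_or_ne (u t) 0).imp (⟨ht, ·⟩) (⟨ht, ·⟩))
        (measure_ne_top_of_subset (union_subset (sep_subset _ _) (sep_subset _ _))
          measure_Icc_lt_top.ne)
    _ ≤ volume.real {t ∈ Icc 0 T | u t = 0} + L0Norm T u := measureReal_union_le _ _
    _ = L0Norm T u := by rw [measureReal_def, hzero, ENNReal.toReal_zero, zero_add]

lemma L0Norm_add_le (hFT : F ⊆ Icc 0 T) (hv : Function.support v ⊆ F) :
    L0Norm T (u + v) ≤ L0Norm T u + volume.real F := by
  refine (measureReal_mono ?_ ?_).trans (measureReal_union_le {t ∈ Icc 0 T | u t ≠ 0} F)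
  · rintro t ⟨ht, hne⟩
    by_cases htF : t ∈ F
    · exact .inr htF
    · have hvt : v t = 0 := Function.notMem_support.1 fun h ↦ htF (hv h)
      exact .inl ⟨ht, by simpa [hvt] using hne⟩
  · exact measure_ne_top_of_subset (union_subset (sep_subset _ _) hFT) measure_Icc_lt_top.ne

lemma magBdd_add (hu : MagBdd T u) (hv : MagBdd T v)
    (hdisj : Disjoint (Function.support u) (Function.support v)) : MagBdd T (u + v) := by
  intro t ht
  by_cases hut : u t = 0
  · simpa [hut] using hv t ht
  · have hvt : v t = 0 := Function.notMem_support.1 (hdisj.notMem_of_mem_left hut)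
    simpa [hvt] using hu t ht

lemma eventually_exists_admissible_L0Norm_lt (hctrb : (ctrbMatrix n A B).rank = n)
    (hu : Admissible n T A B ξ u) (huT : L0Norm T u < T) (huα : L0Norm T u < α) :
    ∀ᶠ η in 𝓝 ξ, ∃ w, Admissible n T A B η w ∧ L0Norm T w < α := by
  obtain ⟨hum, hub, hus⟩ := hu
  have hZ : MeasurableSet {t ∈ Icc 0 T | u t = 0} :=
    measurableSet_Icc.inter (hum (measurableSet_singleton 0))
  obtain ⟨F, hFZ, hF, hF0, hFα⟩ := exists_subset_measure_ne_zero_lt hZ (volume_zeros_ne_zero huT)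
    (ENNReal.ofReal_ne_zero_iff.2 (sub_pos.2 huα))
  have hFT : F ⊆ Icc 0 T := hFZ.trans (sep_subset _ _)
  have htendsto : Tendsto (fun η ↦ ξ - η) (𝓝 ξ) (𝓝 0) :=
    (continuous_const.sub continuous_id).tendsto' _ _ (sub_self ξ)
  filter_upwards [htendsto.eventually
    (eventually_exists_stateInt_eq_of_support_subset hctrb hF hFT hF0)]
  rintro η ⟨v, hvm, hvb, hvF, hvs⟩
  have hdisj : Disjoint (Function.support u) (Function.support v) :=
    disjoint_left.2 fun t hut hvt ↦ hut (hFZ (hvF hvt)).2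
  refine ⟨u + v, ⟨hum.add hvm, magBdd_add hub hvb hdisj, ?_⟩, ?_⟩
  · rw [stateInt_add hum hub hvm hvb, hus, hvs]
    abel
  · have hFreal : volume.real F < α - L0Norm T u := ENNReal.toReal_lt_of_lt_ofReal hFα
    linarith [L0Norm_add_le (u := u) hFT hvF]

lemma mem_reach_iff_exists_admissible :
    ξ ∈ Reach n T A B ↔ ∃ u, Admissible n T A B ξ u := by
  constructor
  · rintro ⟨u, hu, hb, rfl⟩
    exact ⟨-u, hu.neg, fun t ht ↦ by simpa using hb t ht, stateInt_neg u⟩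
  · rintro ⟨u, hu, hb, h⟩
    exact ⟨-u, hu.neg, fun t ht ↦ by simpa using hb t ht, by rw [stateInt_neg, h, neg_neg]⟩

lemma Vbar_le_L0Norm (h : Admissible n T A B ξ u) : Vbar n T A B ξ ≤ L0Norm T u := by
  rw [Vbar, if_pos (mem_reach_iff_exists_admissible.2 ⟨u, h⟩)]
  refine csInf_le ⟨0, ?_⟩ ⟨u, h, rfl⟩
  rintro _ ⟨v, -, rfl⟩
  exact L0Norm_nonneg T v

lemma Vbar_le (hT : 0 ≤ T) (ξ : Fin n → ℝ) : Vbar n T A B ξ ≤ T := by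
  by_cases hξ : ξ ∈ Reach n T A B
  · obtain ⟨u, hu⟩ := mem_reach_iff_exists_admissible.1 hξ
    exact (Vbar_le_L0Norm hu).trans (L0Norm_le hT u)
  · exact (if_neg hξ).le

lemma Vbar_lt_iff (hα : α ≤ T) :
    Vbar n T A B ξ < α ↔ ∃ u, Admissible n T A B ξ u ∧ L0Norm T u < α := by
  refine ⟨fun h ↦ ?_, fun ⟨u, hu, huα⟩ ↦ (Vbar_le_L0Norm hu).trans_lt huα⟩
  have hξ : ξ ∈ Reach n T A B := by
    by_contra hξ
    rw [Vbar, if_neg hξ] at h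
    exact h.not_ge hα
  rw [Vbar, if_pos hξ, V0] at h
  obtain ⟨u₀, hu₀⟩ := mem_reach_iff_exists_admissible.1 hξ
  have hne : {c | ∃ u, Admissible n T A B ξ u ∧ c = L0Norm T u}.Nonempty := ⟨_, u₀, hu₀, rfl⟩
  obtain ⟨_, ⟨u, hu, rfl⟩, huα⟩ := exists_lt_of_csInf_lt hne h
  exact ⟨u, hu, huα⟩

end ControlSystem

theorem Vbar_upperSemicontinuous_general {n : ℕ} {T : ℝ} (hT : 0 ≤ T)
    {A : Matrix (Fin n) (Fin n) ℝ} {B : Fin n → ℝ} (hctrb : (ctrbMatrix n A B).rank = n) :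
    UpperSemicontinuous (Vbar n T A B) := by
  intro ξ α hξ
  rcases lt_or_ge T α with hα | hα
  · exact .of_forall fun η ↦ (Vbar_le hT η).trans_lt hα
  · obtain ⟨u, hu, huα⟩ := (Vbar_lt_iff hα).1 hξ
    have hnear := eventually_exists_admissible_L0Norm_lt hctrb hu (huα.trans_le hα) huα
    exact hnear.mono fun _ ↦ (Vbar_lt_iff hα).2

theorem Vbar_upperSemicontinuous (n : ℕ) (T : ℝ) (hT : 0 < T)
    (A : Matrix (Fin n) (Fin n) ℝ) (B : Fin n → ℝ)
    (hctrb : (ctrbMatrix n A B).rank = n) (hA : A.det ≠ 0) :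
    ∀ α : ℝ, IsOpen {ξ : Fin n → ℝ | Vbar n T A B ξ < α} :=
  (Vbar_upperSemicontinuous_general hT.le hctrb).isOpen_preimage
end
end
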